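/- Let Z=(X,Y) ∈ Ω₁ be such that λ₁⁺, λ₂⁺, λ₁⁻, λ₂⁻ are all real with λ₁⁺λ₂⁺ < 0 and λ₁⁻λ₂⁻ < 0 (so Z ∈ Ω_ss). Then Z is locally Σ-equivalent near the origin to Z_ss = (X_ss, Y_ss), where X_ss(x,y) = (y, x) and Y_ss(x,y) = (y, x). -/

import Mathlib

open Set Filter

noncomputable section

/-- Entry (1,1) of the Jacobian matrix of `X` at the origin. -/
noncomputable def jac11 (X : ℝ × ℝ → ℝ × ℝ) : ℝ := (fderiv ℝ X (0, 0) (1, 0)).1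
/-- Entry (1,2) of the Jacobian matrix of `X` at the origin. -/
noncomputable def jac12 (X : ℝ × ℝ → ℝ × ℝ) : ℝ := (fderiv ℝ X (0, 0) (0, 1)).1
/-- Entry (2,1) of the Jacobian matrix of `X` at the origin, i.e. `∂ₓX₂(0,0)`. -/
noncomputable def jac21 (X : ℝ × ℝ → ℝ × ℝ) : ℝ := (fderiv ℝ X (0, 0) (1, 0)).2
/-- Entry (2,2) of the Jacobian matrix of `X` at the origin. -/
noncomputable def jac22 (X : ℝ × ℝ → ℝ × ℝ) : ℝ := (fderiv ℝ X (0, 0) (0, 1)).2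

/-- Determinant of the Jacobian matrix of `X` at the origin. -/
noncomputable def detJ (X : ℝ × ℝ → ℝ × ℝ) : ℝ := jac11 X * jac22 X - jac12 X * jac21 X
/-- Trace of the Jacobian matrix of `X` at the origin. -/
noncomputable def trJ (X : ℝ × ℝ → ℝ × ℝ) : ℝ := jac11 X + jac22 X

/-- The first (complex) eigenvalue of the Jacobian matrix of `X` at the origin. -/
noncomputable def eig1 (X : ℝ × ℝ → ℝ × ℝ) : ℂ :=
  if 0 ≤ trJ X ^ 2 - 4 * detJ X then
    (((trJ X + Real.sqrt (trJ X ^ 2 - 4 * detJ X)) / 2 : ℝ) : ℂ)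
  else
    (((trJ X / 2 : ℝ) : ℂ) + (Real.sqrt (4 * detJ X - trJ X ^ 2) / 2 : ℝ) * Complex.I)

/-- The second (complex) eigenvalue of the Jacobian matrix of `X` at the origin. -/
noncomputable def eig2 (X : ℝ × ℝ → ℝ × ℝ) : ℂ :=
  if 0 ≤ trJ X ^ 2 - 4 * detJ X then
    (((trJ X - Real.sqrt (trJ X ^ 2 - 4 * detJ X)) / 2 : ℝ) : ℂ)
  else
    (((trJ X / 2 : ℝ) : ℂ) - (Real.sqrt (4 * detJ X - trJ X ^ 2) / 2 : ℝ) * Complex.I)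

/-- The quantity ℓ : `Re λ₁⁺/|Im λ₁⁺| + Re λ₁⁻/|Im λ₁⁻|` when both imaginary parts are
nonzero, and `1` otherwise. -/
noncomputable def ellVal (X Y : ℝ × ℝ → ℝ × ℝ) : ℝ :=
  if (eig1 X).im * (eig1 Y).im ≠ 0 then
    (eig1 X).re / |(eig1 X).im| + (eig1 Y).re / |(eig1 Y).im|
  else 1

/-- Membership in Ω₀ : `Z = (X, Y)` is a piecewise `C¹` vector field on the open set `U`
containing the origin, the origin is a zero of both `X` and `Y`, it is non-degenerate for
both, and `∂ₓX₂(0,0) ⬝ ∂ₓY₂(0,0) > 0`. -/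
def InOmega0 (U : Set (ℝ × ℝ)) (X Y : ℝ × ℝ → ℝ × ℝ) : Prop :=
  IsOpen U ∧ (0, 0) ∈ U ∧ ContDiffOn ℝ 1 X U ∧ ContDiffOn ℝ 1 Y U ∧
    X (0, 0) = (0, 0) ∧ Y (0, 0) = (0, 0) ∧ detJ X * detJ Y ≠ 0 ∧ jac21 X * jac21 Y > 0

/-- Membership in Ω₁ : member of Ω₀ with distinct eigenvalues of each Jacobian matrix
and `ℓ ≠ 0`. -/
def InOmega1 (U : Set (ℝ × ℝ)) (X Y : ℝ × ℝ → ℝ × ℝ) : Prop :=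
  InOmega0 U X Y ∧ eig1 X ≠ eig2 X ∧ eig1 Y ≠ eig2 Y ∧ ellVal X Y ≠ 0

/-- `γ` is a solution of `ẋ = X(x)` on the time set `I`. -/
def IsSolutionOn (X : ℝ × ℝ → ℝ × ℝ) (γ : ℝ → ℝ × ℝ) (I : Set ℝ) : Prop :=
  ∀ t ∈ I, HasDerivAt γ (X (γ t)) t

/-- `H` maps orbit arcs of `X` lying in `S` onto orbit arcs of `X'` lying in `S'`,
preserving the direction of time (via an increasing homeomorphism of time intervals). -/
def MapsOrbits (X X' : ℝ × ℝ → ℝ × ℝ) (H : ℝ × ℝ → ℝ × ℝ) (S S' : Set (ℝ × ℝ)) : Prop :=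
  ∀ (γ : ℝ → ℝ × ℝ) (I : Set ℝ), I.OrdConnected → IsSolutionOn X γ I →
    (∀ t ∈ I, γ t ∈ S) →
    ∃ (δ : ℝ → ℝ × ℝ) (J : Set ℝ) (τ : ℝ → ℝ),
      J.OrdConnected ∧ IsSolutionOn X' δ J ∧ (∀ s ∈ J, δ s ∈ S') ∧
      Set.BijOn τ I J ∧ StrictMonoOn τ I ∧ ContinuousOn τ I ∧
      ∀ t ∈ I, H (γ t) = δ (τ t)

/-- Local Σ-equivalence near the origin between the piecewise smooth vector fields
`Z = (X, Y)` and `Z' = (X', Y')`: a homeomorphism `H` between neighborhoods of the origin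
fixing the origin, preserving the switching line `{y = 0}`, and mapping orbit arcs of `X`
(resp. `Y`) in `{y ≥ 0}` (resp. `{y ≤ 0}`) onto orbit arcs of `X'` (resp. `Y'`),
preserving the direction of time, and conversely. -/
def LocalSigmaEquiv (X Y X' Y' : ℝ × ℝ → ℝ × ℝ) : Prop :=
  ∃ (U₀ V₀ : Set (ℝ × ℝ)) (H Hinv : ℝ × ℝ → ℝ × ℝ),
    U₀ ∈ nhds ((0, 0) : ℝ × ℝ) ∧ V₀ ∈ nhds ((0, 0) : ℝ × ℝ) ∧
    ContinuousOn H U₀ ∧ ContinuousOn Hinv V₀ ∧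
    Set.BijOn H U₀ V₀ ∧
    (∀ p ∈ U₀, Hinv (H p) = p) ∧ (∀ q ∈ V₀, H (Hinv q) = q) ∧
    H (0, 0) = (0, 0) ∧
    H '' (U₀ ∩ {p : ℝ × ℝ | p.2 = 0}) = V₀ ∩ {p : ℝ × ℝ | p.2 = 0} ∧
    MapsOrbits X X' H (U₀ ∩ {p : ℝ × ℝ | 0 ≤ p.2}) (V₀ ∩ {p : ℝ × ℝ | 0 ≤ p.2}) ∧
    MapsOrbits Y Y' H (U₀ ∩ {p : ℝ × ℝ | p.2 ≤ 0}) (V₀ ∩ {p : ℝ × ℝ | p.2 ≤ 0}) ∧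
    MapsOrbits X' X Hinv (V₀ ∩ {p : ℝ × ℝ | 0 ≤ p.2}) (U₀ ∩ {p : ℝ × ℝ | 0 ≤ p.2}) ∧
    MapsOrbits Y' Y Hinv (V₀ ∩ {p : ℝ × ℝ | p.2 ≤ 0}) (U₀ ∩ {p : ℝ × ℝ | p.2 ≤ 0})

/-!
In eigencoordinates a saddle is a linear saddle `(lam * u, -mu * w)` plus a remainder with small
Lipschitz constant, and the switching line becomes the antidiagonal. In the wedge `|w| ≤ u` the
coordinate `u` increases along orbits, and the slope `z = w / u`, as a function of `τ = log u`,
solves an equation that pushes solutions into the strip `|z| ≤ 1` and contracts it. Its solutions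
are therefore parametrized by the time and side at which they enter the strip, with one exceptional
solution that stays inside for all time: the unstable manifold. This parameter straightens the
orbits in the wedge to horizontal lines. Reversing time and exchanging the axes, the orbits in the
wedge `|u| ≤ w` become vertical lines, so that on the half plane `0 ≤ u + w` all orbits become
level sets of `min u w`, while the antidiagonal is fixed pointwise. Straightening the orbits of one
saddle and bending them back to those of another is thus an equivalence on a half plane; on the
switching line it is linear, and its factor can be chosen equal for the upper and the lower half
plane because the two saddles cross this line in the same direction.
-/

section

open scoped NNReal Topology

/-! ### Global solutions of Lipschitz equations -/

section

variable {E : Type*} [NormedAddCommGroup E] [NormedSpace ℝ E] {v : ℝ → E → E} {K : ℝ≥0}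

theorem eqOn_of_isIntegralCurveOn (hv : ∀ t, LipschitzWith K (v t)) {γ δ : ℝ → E} {I : Set ℝ}
    (hI : I.OrdConnected) (hγ : IsIntegralCurveOn γ v I) (hδ : IsIntegralCurveOn δ v I) {a : ℝ}
    (ha : a ∈ I) (h : γ a = δ a) : EqOn γ δ I := by
  intro b hb
  rcases le_total a b with hab | hba
  · have hsub : Icc a b ⊆ I := hI.out ha hb
    have right {ξ : ℝ → E} (hξ : IsIntegralCurveOn ξ v I) (t : ℝ) (ht : t ∈ Ico a b) :
        HasDerivWithinAt ξ (v t (ξ t)) (Ici t) t :=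
      ((hξ.mono hsub) t (Ico_subset_Icc_self ht)).mono_of_mem_nhdsWithin (Icc_mem_nhdsGE_of_mem ht)
    exact ODE_solution_unique_of_mem_Icc_right (fun t _ => (hv t).lipschitzOnWith)
      (hγ.mono hsub).continuousOn (right hγ) (fun _ _ => mem_univ _)
      (hδ.mono hsub).continuousOn (right hδ) (fun _ _ => mem_univ _) h (right_mem_Icc.2 hab)
  · have hsub : Icc b a ⊆ I := hI.out hb ha
    have left {ξ : ℝ → E} (hξ : IsIntegralCurveOn ξ v I) (t : ℝ) (ht : t ∈ Ioc b a) :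
        HasDerivWithinAt ξ (v t (ξ t)) (Iic t) t :=
      ((hξ.mono hsub) t (Ioc_subset_Icc_self ht)).mono_of_mem_nhdsWithin (Icc_mem_nhdsLE_of_mem ht)
    exact ODE_solution_unique_of_mem_Icc_left (fun t _ => (hv t).lipschitzOnWith)
      (hγ.mono hsub).continuousOn (left hγ) (fun _ _ => mem_univ _)
      (hδ.mono hsub).continuousOn (left hδ) (fun _ _ => mem_univ _) h (left_mem_Icc.2 hba)

theorem eq_of_isIntegralCurve (hv : ∀ t, LipschitzWith K (v t)) {γ δ : ℝ → E}
    (hγ : IsIntegralCurve γ v) (hδ : IsIntegralCurve δ v) {a : ℝ} (h : γ a = δ a) : γ = δ :=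
  funext fun t => eqOn_of_isIntegralCurveOn hv ordConnected_univ (hγ.isIntegralCurveOn univ)
    (hδ.isIntegralCurveOn univ) (mem_univ a) h (mem_univ t)

theorem exists_isIntegralCurveOn_union {I J : Set ℝ} (hv : ∀ t, LipschitzWith K (v t))
    (hI : IsOpen I) (hJ : IsOpen J) (hIJ : (I ∩ J).OrdConnected) {γ δ : ℝ → E}
    (hγ : IsIntegralCurveOn γ v I) (hδ : IsIntegralCurveOn δ v J) {a : ℝ} (ha : a ∈ I ∩ J)
    (h : γ a = δ a) : ∃ ξ, EqOn ξ γ I ∧ IsIntegralCurveOn ξ v (I ∪ J) := by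
  classical
  have hγδ : EqOn γ δ (I ∩ J) := eqOn_of_isIntegralCurveOn hv hIJ (hγ.mono inter_subset_left)
    (hδ.mono inter_subset_right) ha h
  have hξI : EqOn (I.piecewise γ δ) γ I := piecewise_eqOn I γ δ
  have hξJ : EqOn (I.piecewise γ δ) δ J := fun t ht => by
    by_cases htI : t ∈ I
    · rw [hξI htI, hγδ ⟨htI, ht⟩]
    · exact piecewise_eq_of_notMem I γ δ htI
  have of_eqOn {ζ : ℝ → E} {S : Set ℝ} (hS : IsOpen S) (hζ : IsIntegralCurveOn ζ v S)
      (heq : EqOn (I.piecewise γ δ) ζ S) (t : ℝ) (ht : t ∈ S) :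
      HasDerivAt (I.piecewise γ δ) (v t (I.piecewise γ δ t)) t := by
    rw [heq ht]
    exact ((hζ t ht).hasDerivAt (hS.mem_nhds ht)).congr_of_eventuallyEq
      (heq.eventuallyEq_of_mem (hS.mem_nhds ht))
  exact ⟨_, hξI, fun t ht =>
    (ht.elim (of_eqOn hI hγ hξI t) (of_eqOn hJ hδ hξJ t)).hasDerivWithinAt⟩

section Existence
variable [CompleteSpace E]

theorem exists_isIntegralCurveOn_Ioo_of_lipschitz (hv : ∀ t, LipschitzWith K (v t))
    (hc : ∀ x, Continuous fun t => v t x) (t₀ : ℝ) (x₀ : E) :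
    ∃ γ, γ t₀ = x₀ ∧
      IsIntegralCurveOn γ v (Ioo (t₀ - 1 / (2 * K + 1)) (t₀ + 1 / (2 * K + 1))) := by
  set δ : ℝ := 1 / (2 * K + 1) with hδ
  have hδ0 : 0 < δ := by positivity
  obtain ⟨C, hC⟩ := isCompact_Icc.exists_bound_of_continuousOn (s := Icc (t₀ - δ) (t₀ + δ))
    (hc x₀).continuousOn
  obtain ⟨R, hCR⟩ : ∃ R : ℝ≥0, C ≤ R := ⟨C.toNNReal, Real.le_coe_toNNReal C⟩
  have hpl : IsPicardLindelof v (tmin := t₀ - δ) (tmax := t₀ + δ) ⟨t₀, by simp [hδ0.le]⟩ x₀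
      (R + R) 0 (R + K * (R + R)) K := by
    refine ⟨fun t _ => (hv t).lipschitzOnWith, fun x _ => (hc x).continuousOn,
      fun t ht x hx => ?_, ?_⟩
    · have hdist := (hv t).dist_le_mul x x₀
      rw [dist_eq_norm] at hdist
      calc ‖v t x‖ ≤ ‖v t x₀‖ + ‖v t x - v t x₀‖ := norm_le_insert' _ _
        _ ≤ R + K * (R + R) := by
          gcongr
          · exact (hC t ht).trans hCR
          · exact hdist.trans (mul_le_mul_of_nonneg_left hx K.coe_nonneg)
    · have hmul : (R + K * (R + R)) * δ = (R : ℝ) := by rw [hδ]; field_simp; ring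
      simp [hmul]
  obtain ⟨γ, h₀, hγ⟩ := hpl.exists_eq_forall_mem_Icc_hasDerivWithinAt₀
  exact ⟨γ, h₀, IsIntegralCurveOn.mono hγ Ioo_subset_Icc_self⟩

theorem exists_isIntegralCurveOn_Ioo_nat_mul (hv : ∀ t, LipschitzWith K (v t))
    (hc : ∀ x, Continuous fun t => v t x) (t₀ : ℝ) (x₀ : E) {r : ℝ} (hr : r = 1 / (2 * K + 1) / 2)
    (n : ℕ) :
    ∃ γ, γ t₀ = x₀ ∧ IsIntegralCurveOn γ v (Ioo (t₀ - (n + 1) * r) (t₀ + (n + 1) * r)) := by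
  have hr0 : 0 < r := by rw [hr]; positivity
  have local_sol (t x) := exists_isIntegralCurveOn_Ioo_of_lipschitz hv hc t x
  rw [show 1 / (2 * (K : ℝ) + 1) = 2 * r by rw [hr]; ring] at local_sol
  induction n with
  | zero =>
    obtain ⟨γ, h₀, hγ⟩ := local_sol t₀ x₀
    exact ⟨γ, h₀, hγ.mono (Ioo_subset_Ioo (by norm_num; linarith) (by norm_num; linarith))⟩
  | succ n ih =>
    obtain ⟨γ, h₀, hγ⟩ := ih
    have hn : 0 ≤ n * r := by positivity
    obtain ⟨α, hα₀, hα⟩ := local_sol (t₀ + n * r) (γ (t₀ + n * r))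
    obtain ⟨ξ, hξγ, hξ⟩ := exists_isIntegralCurveOn_union hv isOpen_Ioo isOpen_Ioo
      (ordConnected_Ioo.inter ordConnected_Ioo) hγ hα (a := t₀ + n * r)
      ⟨⟨by linarith, by linarith⟩, by linarith, by linarith⟩ hα₀.symm
    have hconn : ((Ioo (t₀ - (n + 1) * r) (t₀ + (n + 1) * r) ∪
        Ioo (t₀ + n * r - 2 * r) (t₀ + n * r + 2 * r)) ∩
        Ioo (t₀ - n * r - 2 * r) (t₀ - n * r + 2 * r)).OrdConnected := by
      rw [Ioo_union_Ioo' (by linarith) (by linarith)]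
      exact ordConnected_Ioo.inter ordConnected_Ioo
    obtain ⟨β, hβ₀, hβ⟩ := local_sol (t₀ - n * r) (ξ (t₀ - n * r))
    obtain ⟨ζ, hζξ, hζ⟩ := exists_isIntegralCurveOn_union hv (isOpen_Ioo.union isOpen_Ioo)
      isOpen_Ioo hconn hξ hβ (a := t₀ - n * r)
      ⟨.inl ⟨by linarith, by linarith⟩, by linarith, by linarith⟩ hβ₀.symm
    have ht₀ : t₀ ∈ Ioo (t₀ - (n + 1) * r) (t₀ + (n + 1) * r) := ⟨by linarith, by linarith⟩
    refine ⟨ζ, by rw [hζξ (.inl ht₀), hξγ ht₀, h₀], hζ.mono fun t ⟨h₁, h₂⟩ => ?_⟩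
    push_cast at h₁ h₂
    rcases lt_or_ge t (t₀ + (n + 1) * r) with h | h
    · rcases lt_or_ge (t₀ - (n + 1) * r) t with h' | h'
      · exact .inl (.inl ⟨h', h⟩)
      · exact .inr ⟨by linarith, by linarith⟩
    · exact .inl (.inr ⟨by linarith, by linarith⟩)

theorem exists_isIntegralCurve_of_lipschitz (hv : ∀ t, LipschitzWith K (v t))
    (hc : ∀ x, Continuous fun t => v t x) (t₀ : ℝ) (x₀ : E) :
    ∃ γ, γ t₀ = x₀ ∧ IsIntegralCurve γ v := by
  obtain ⟨r, hr⟩ : ∃ r : ℝ, r = 1 / (2 * K + 1) / 2 := ⟨_, rfl⟩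
  have hr0 : 0 < r := by rw [hr]; positivity
  choose γ h₀ hγ using exists_isIntegralCurveOn_Ioo_nat_mul hv hc t₀ x₀ hr
  set I : ℕ → Set ℝ := fun n => Ioo (t₀ - (n + 1) * r) (t₀ + (n + 1) * r)
  have ht₀ (n) : t₀ ∈ I n := by
    have : 0 < (n + 1) * r := by positivity
    exact ⟨by linarith, by linarith⟩
  have agree (n m t) (hn : t ∈ I n) (hm : t ∈ I m) : γ n t = γ m t :=
    eqOn_of_isIntegralCurveOn hv (ordConnected_Ioo.inter ordConnected_Ioo)
      ((hγ n).mono inter_subset_left) ((hγ m).mono inter_subset_right) ⟨ht₀ n, ht₀ m⟩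
      ((h₀ n).trans (h₀ m).symm) ⟨hn, hm⟩
  have cover (t) : t ∈ I ⌈|t - t₀| / r⌉₊ := by
    have := (div_le_iff₀ hr0).1 (Nat.le_ceil (|t - t₀| / r))
    have h₁ := neg_abs_le (t - t₀)
    have h₂ := le_abs_self (t - t₀)
    constructor <;> linarith
  refine ⟨fun t => γ ⌈|t - t₀| / r⌉₊ t, h₀ _, fun t => ?_⟩
  have hmem := isOpen_Ioo.mem_nhds (cover t)
  refine ((hγ _ t (cover t)).hasDerivAt hmem).congr_of_eventuallyEq ?_
  filter_upwards [hmem] with s hs using agree _ _ s (cover s) hs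

end Existence

end

/-! ### Dissipative strip equations -/

/-- A scalar equation `z' = K τ z` whose right-hand side pushes solutions into the strip `|z| ≤ 1`
from both sides, and which contracts the strip at a uniform exponential rate. -/
structure DissipativeStrip (K : ℝ → ℝ → ℝ) (L : ℝ≥0) : Prop where
  continuous : ∀ z, Continuous fun τ => K τ z
  lipschitz : ∀ τ, LipschitzWith L (K τ)
  le_neg_one : ∀ τ z, 1 ≤ z → K τ z ≤ -1
  one_le : ∀ τ z, z ≤ -1 → 1 ≤ K τ z
  contract : ∀ τ z z', -1 ≤ z → z ≤ z' → z' ≤ 1 → K τ z' - K τ z ≤ -(z' - z) / 2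

theorem isIntegralCurve_neg {K : ℝ → ℝ → ℝ} {ζ : ℝ → ℝ} (h : IsIntegralCurve ζ K) :
    IsIntegralCurve (-ζ) fun τ z => -K τ (-z) := fun τ => by
  simpa only [Pi.neg_apply, neg_neg] using (h τ).neg

namespace DissipativeStrip

variable {K : ℝ → ℝ → ℝ} {L : ℝ≥0} {ζ ξ : ℝ → ℝ} {s t : ℝ}

theorem neg (h : DissipativeStrip K L) : DissipativeStrip (fun τ z => -K τ (-z)) L where
  continuous z := (h.continuous (-z)).neg
  lipschitz τ := by
    simpa only [one_mul, mul_one] using!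
      (LipschitzWith.id.neg.comp (h.lipschitz τ)).comp LipschitzWith.id.neg
  le_neg_one τ z hz := by linarith [h.one_le τ (-z) (by linarith)]
  one_le τ z hz := by linarith [h.le_neg_one τ (-z) (by linarith)]
  contract τ z z' h₁ h₂ h₃ := by
    linarith [h.contract τ (-z') (-z) (by linarith) (by linarith) (by linarith)]

theorem exists_solution (h : DissipativeStrip K L) (a z : ℝ) :
    ∃ ζ, ζ a = z ∧ IsIntegralCurve ζ K :=
  exists_isIntegralCurve_of_lipschitz h.lipschitz h.continuous a z

theorem solution_unique (h : DissipativeStrip K L) (hζ : IsIntegralCurve ζ K)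
    (hξ : IsIntegralCurve ξ K) (hst : ζ s = ξ s) : ζ = ξ :=
  eq_of_isIntegralCurve h.lipschitz hζ hξ hst

theorem solution_lt (h : DissipativeStrip K L) (hζ : IsIntegralCurve ζ K)
    (hξ : IsIntegralCurve ξ K) (hs : ζ s < ξ s) (t : ℝ) : ζ t < ξ t := by
  by_contra! hcon
  obtain ⟨c, hc⟩ := intermediate_value_univ₂ hζ.continuous hξ.continuous hs.le hcon
  rw [h.solution_unique hζ hξ hc] at hs
  exact lt_irrefl _ hs

theorem one_add_le (h : DissipativeStrip K L) (hζ : IsIntegralCurve ζ K) (ht : 1 ≤ ζ t)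
    (hst : s ≤ t) : 1 + (t - s) / 2 ≤ ζ s := by
  have hder (x : ℝ) : HasDerivAt (fun x => -ζ (t - x)) (K (t - x) (ζ (t - x))) x := by
    simpa using! ((hζ (t - x)).scomp x ((hasDerivAt_id x).const_sub t)).neg
  have hle := image_le_of_deriv_right_lt_deriv_boundary (a := 0) (b := t - s)
    (f := fun x => -ζ (t - x)) (B := fun x => -(1 + x / 2)) (B' := fun _ => -(1 / 2))
    (fun x _ => (hder x).continuousAt.continuousWithinAt)
    (fun x _ => (hder x).hasDerivWithinAt) (by simpa using ht)
    (fun x => (((hasDerivAt_id x).div_const 2).const_add 1).neg)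
    (fun x hx hxe => by linarith [hx.1, h.le_neg_one (t - x) (ζ (t - x)) (by linarith [hx.1])])
    (x := t - s) ⟨by linarith, le_rfl⟩
  simp only [sub_sub_cancel] at hle
  linarith

theorem le_neg_one_add (h : DissipativeStrip K L) (hζ : IsIntegralCurve ζ K) (ht : ζ t ≤ -1)
    (hst : s ≤ t) : ζ s ≤ -(1 + (t - s) / 2) :=
  le_neg.1 (h.neg.one_add_le (isIntegralCurve_neg hζ) (le_neg.1 ht) hst)

theorem exists_eq_one (h : DissipativeStrip K L) (hζ : IsIntegralCurve ζ K) (hs : 1 ≤ ζ s) :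
    ∃ t, ζ t = 1 := by
  by_cases hb : ∃ b, ζ b ≤ 1
  · exact mem_range_of_exists_le_of_exists_ge hζ.continuous hb ⟨s, hs⟩
  · push Not at hb
    have := h.one_add_le hζ (hb (s + 2 * ζ s)).le (by linarith : s ≤ s + 2 * ζ s)
    linarith

theorem exists_eq_neg_one (h : DissipativeStrip K L) (hζ : IsIntegralCurve ζ K)
    (hs : ζ s ≤ -1) : ∃ t, ζ t = -1 := by
  obtain ⟨t, ht⟩ := h.neg.exists_eq_one (isIntegralCurve_neg hζ) (le_neg.1 hs)
  exact ⟨t, neg_eq_iff_eq_neg.1 ht⟩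

theorem not_lt_of_bounded (h : DissipativeStrip K L) (hζ : IsIntegralCurve ζ K)
    (hξ : IsIntegralCurve ξ K) (hζb : ∀ τ, |ζ τ| < 1) (hξb : ∀ τ, |ξ τ| < 1) :
    ¬ ζ 0 < ξ 0 := by
  intro hlt
  have hanti : Antitone fun t => Real.exp (t / 2) * (ξ t - ζ t) := by
    refine antitone_of_hasDerivAt_nonpos
      (fun t => (((hasDerivAt_id t).div_const 2).exp).mul ((hξ t).sub (hζ t))) fun t => ?_
    have hcontract := h.contract t (ζ t) (ξ t) (abs_lt.1 (hζb t)).1.le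
      (h.solution_lt hζ hξ hlt t).le (abs_lt.1 (hξb t)).2.le
    calc _ = Real.exp (t / 2) * ((ξ t - ζ t) / 2 + (K t (ξ t) - K t (ζ t))) := by simp; ring
      _ ≤ 0 := mul_nonpos_of_nonneg_of_nonpos (Real.exp_pos _).le (by linarith)
  have hlim : Tendsto (fun t : ℝ => Real.exp (t / 2) * 2) atBot (𝓝 (0 * 2)) :=
    (Real.tendsto_exp_atBot.comp (tendsto_id.atBot_div_const two_pos)).mul_const 2
  rw [zero_mul] at hlim
  obtain ⟨t, ht, ht₀⟩ :=
    ((hlim.eventually_lt_const (sub_pos.2 hlt)).and (eventually_le_atBot 0)).exists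
  have hgap : ξ t - ζ t ≤ 2 := by linarith [(abs_lt.1 (hζb t)).1, (abs_lt.1 (hξb t)).2]
  have hmono := hanti ht₀
  simp only [zero_div, Real.exp_zero, one_mul] at hmono
  linarith [mul_le_mul_of_nonneg_left hgap (Real.exp_pos (t / 2)).le]

theorem bounded_solution_unique (h : DissipativeStrip K L) (hζ : IsIntegralCurve ζ K)
    (hξ : IsIntegralCurve ξ K) (hζb : ∀ τ, |ζ τ| < 1) (hξb : ∀ τ, |ξ τ| < 1) : ζ = ξ :=
  h.solution_unique hζ hξ (le_antisymm (not_lt.1 (h.not_lt_of_bounded hξ hζ hξb hζb))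
    (not_lt.1 (h.not_lt_of_bounded hζ hξ hζb hξb)))

theorem isOpen_setOf_exists_lt_neg_one (h : DissipativeStrip K L) :
    IsOpen {z | ∃ ζ, IsIntegralCurve ζ K ∧ ζ 0 = z ∧ ∃ t, ζ t < -1} := by
  refine isOpen_iff_mem_nhds.2 ?_
  rintro _ ⟨ζ, hζ, rfl, t, ht⟩
  obtain ⟨m, hζm, hm⟩ := exists_between ht
  obtain ⟨ξ, rfl, hξ⟩ := h.exists_solution t m
  filter_upwards [Iio_mem_nhds (h.solution_lt hζ hξ hζm 0)] with z hz
  obtain ⟨χ, rfl, hχ⟩ := h.exists_solution 0 z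
  exact ⟨χ, hχ, rfl, t, (h.solution_lt hχ hξ hz t).trans hm⟩

theorem isOpen_setOf_exists_one_lt (h : DissipativeStrip K L) :
    IsOpen {z | ∃ ζ, IsIntegralCurve ζ K ∧ ζ 0 = z ∧ ∃ t, 1 < ζ t} := by
  convert h.neg.isOpen_setOf_exists_lt_neg_one.preimage continuous_neg using 1
  ext z
  constructor
  · rintro ⟨ζ, hζ, rfl, t, ht⟩
    exact ⟨-ζ, isIntegralCurve_neg hζ, rfl, t, neg_lt_neg ht⟩
  · rintro ⟨ζ, hζ, hz, t, ht⟩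
    exact ⟨-ζ, by simpa using isIntegralCurve_neg hζ, neg_eq_iff_eq_neg.2 hz, t, lt_neg.1 ht⟩

theorem not_one_lt_and_lt_neg_one (h : DissipativeStrip K L) (hζ : IsIntegralCurve ζ K) :
    ¬ (1 < ζ s ∧ ζ t < -1) := by
  rintro ⟨hs, ht⟩
  rcases le_total s t with hst | hts
  · linarith [h.le_neg_one_add hζ ht.le hst]
  · linarith [h.one_add_le hζ hs.le hts]

-- If no solution were bounded, then `ℝ`, as the set of initial values, would be the disjoint union
-- of two nonempty open sets: a past above the strip and a past below it.
theorem exists_bounded_solution (h : DissipativeStrip K L) :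
    ∃ ζ, IsIntegralCurve ζ K ∧ ∀ τ, |ζ τ| < 1 := by
  by_contra! hcon
  have cover (z : ℝ) : (∃ ζ, IsIntegralCurve ζ K ∧ ζ 0 = z ∧ ∃ t, ζ t < -1) ∨
      ∃ ζ, IsIntegralCurve ζ K ∧ ζ 0 = z ∧ ∃ t, 1 < ζ t := by
    obtain ⟨ζ, hz, hζ⟩ := h.exists_solution 0 z
    obtain ⟨τ, hτ⟩ := hcon ζ hζ
    rcases le_abs'.1 hτ with hτ | hτ
    · exact .inl ⟨ζ, hζ, hz, τ - 1, by linarith [h.le_neg_one_add hζ hτ (sub_one_lt τ).le]⟩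
    · exact .inr ⟨ζ, hζ, hz, τ - 1, by linarith [h.one_add_le hζ hτ (sub_one_lt τ).le]⟩
  obtain ⟨ζ, hζ₀, hζ⟩ := h.exists_solution 0 (-2)
  obtain ⟨ξ, hξ₀, hξ⟩ := h.exists_solution 0 2
  obtain ⟨_, -, ⟨α, hα, rfl, s, hs⟩, β, hβ, hβα, t, ht⟩ :=
    isPreconnected_univ _ _ h.isOpen_setOf_exists_lt_neg_one h.isOpen_setOf_exists_one_lt
      (fun z _ => cover z) ⟨-2, trivial, ζ, hζ, hζ₀, 0, by linarith⟩
      ⟨2, trivial, ξ, hξ, hξ₀, 0, by linarith⟩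
  rw [h.solution_unique hβ hα hβα] at ht
  exact h.not_one_lt_and_lt_neg_one hα ⟨ht, hs⟩

end DissipativeStrip

theorem continuous_uncurry_of_strictMono_of_surjective {α β γ : Type*} [TopologicalSpace α]
    [LinearOrder α] [OrderTopology α] [TopologicalSpace β] [TopologicalSpace γ] [LinearOrder γ]
    [OrderTopology γ] [DenselyOrdered γ] {f : α → β → γ} (hf : ∀ a, Continuous (f a))
    (hmono : ∀ b, StrictMono (f · b)) (hsurj : ∀ b, Function.Surjective (f · b)) :
    Continuous (Function.uncurry f) := by
  refine continuous_iff_continuousAt.2 fun ⟨a, b⟩ =>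
    tendsto_order.2 ⟨fun y (hy : y < f a b) => ?_, fun y (hy : f a b < y) => ?_⟩
  · obtain ⟨y', hy, hy'⟩ := exists_between hy
    obtain ⟨a', rfl⟩ := hsurj b y'
    filter_upwards [(isOpen_Ioi.preimage continuous_fst).mem_nhds ((hmono b).lt_iff_lt.1 hy'),
      (isOpen_Ioi.preimage ((hf a').comp continuous_snd)).mem_nhds hy] with p hp hp'
    exact lt_trans hp' (hmono p.2 hp)
  · obtain ⟨y', hy, hy'⟩ := exists_between hy
    obtain ⟨a', rfl⟩ := hsurj b y'
    filter_upwards [(isOpen_Iio.preimage continuous_fst).mem_nhds ((hmono b).lt_iff_lt.1 hy),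
      (isOpen_Iio.preimage ((hf a').comp continuous_snd)).mem_nhds hy'] with p hp hp'
    exact lt_trans (hmono p.2 hp) hp'

/-- The solutions of a strip equation, `Z b` being the one that enters the strip `|z| ≤ 1` at time
`log |b|` through `z = 1` if `b > 0` and through `z = -1` if `b < 0`; `Z 0` never leaves it. -/
structure EntryFamily (K Z : ℝ → ℝ → ℝ) : Prop where
  solution : ∀ b, IsIntegralCurve (Z b) K
  eq_one : ∀ b, 0 < b → Z b (Real.log b) = 1
  eq_neg_one : ∀ b, b < 0 → Z b (Real.log (-b)) = -1
  bounded : ∀ τ, |Z 0 τ| < 1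

theorem DissipativeStrip.exists_entryFamily {K : ℝ → ℝ → ℝ} {L : ℝ≥0}
    (h : DissipativeStrip K L) : ∃ Z, EntryFamily K Z := by
  have hex (b : ℝ) : ∃ ζ, IsIntegralCurve ζ K ∧ (0 < b → ζ (Real.log b) = 1) ∧
      (b < 0 → ζ (Real.log (-b)) = -1) ∧ (b = 0 → ∀ τ, |ζ τ| < 1) := by
    rcases lt_trichotomy b 0 with hb | rfl | hb
    · obtain ⟨ζ, h₀, hζ⟩ := h.exists_solution (Real.log (-b)) (-1)
      exact ⟨ζ, hζ, fun hb' => absurd hb' hb.not_gt, fun _ => h₀, fun hb' => absurd hb' hb.ne⟩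
    · obtain ⟨ζ, hζ, hb⟩ := h.exists_bounded_solution
      exact ⟨ζ, hζ, fun h₀ => absurd h₀ (lt_irrefl 0), fun h₀ => absurd h₀ (lt_irrefl 0),
        fun _ => hb⟩
    · obtain ⟨ζ, h₀, hζ⟩ := h.exists_solution (Real.log b) 1
      exact ⟨ζ, hζ, fun _ => h₀, fun hb' => absurd hb' hb.not_gt, fun hb' => absurd hb' hb.ne'⟩
  choose Z hZ hpos hneg hzero using hex
  exact ⟨Z, hZ, hpos, hneg, hzero 0 rfl⟩

namespace EntryFamily

variable {K Z : ℝ → ℝ → ℝ} {L : ℝ≥0}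

theorem neg (hZ : EntryFamily K Z) : EntryFamily (fun τ z => -K τ (-z)) fun b => -Z (-b) where
  solution b := isIntegralCurve_neg (hZ.solution (-b))
  eq_one b hb := by simpa using congrArg Neg.neg (hZ.eq_neg_one (-b) (neg_lt_zero.2 hb))
  eq_neg_one b hb := congrArg Neg.neg (hZ.eq_one (-b) (neg_pos.2 hb))
  bounded τ := by simpa using hZ.bounded τ

theorem exp_eq_one (hZ : EntryFamily K Z) (τ : ℝ) : Z (Real.exp τ) τ = 1 := by
  simpa using hZ.eq_one _ (Real.exp_pos τ)

theorem neg_exp_eq_neg_one (hZ : EntryFamily K Z) (τ : ℝ) : Z (-Real.exp τ) τ = -1 := by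
  simpa using hZ.eq_neg_one _ (neg_lt_zero.2 (Real.exp_pos τ))

theorem lt_of_lt_of_pos (h : DissipativeStrip K L) (hZ : EntryFamily K Z) {b b' : ℝ}
    (hb' : 0 < b') (hbb' : b < b') (τ : ℝ) : Z b τ < Z b' τ := by
  rcases lt_trichotomy b 0 with hb | rfl | hb
  · refine h.solution_lt (hZ.solution b) (hZ.solution b')
      (s := min (Real.log (-b)) (Real.log b')) ?_ τ
    linarith [h.le_neg_one_add (hZ.solution b) (hZ.eq_neg_one b hb).le
        (min_le_left _ (Real.log b')),
      h.one_add_le (hZ.solution b') (hZ.eq_one b' hb').ge (min_le_right (Real.log (-b)) _),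
      min_le_left (Real.log (-b)) (Real.log b'), min_le_right (Real.log (-b)) (Real.log b')]
  · refine h.solution_lt (hZ.solution 0) (hZ.solution b') (s := Real.log b') ?_ τ
    rw [hZ.eq_one b' hb']
    exact (abs_lt.1 (hZ.bounded _)).2
  · refine h.solution_lt (hZ.solution b) (hZ.solution b') (s := Real.log b) ?_ τ
    have hlog := Real.log_lt_log hb hbb'
    linarith [hZ.eq_one b hb, h.one_add_le (hZ.solution b') (hZ.eq_one b' hb').ge hlog.le]

theorem strictMono (h : DissipativeStrip K L) (hZ : EntryFamily K Z) (τ : ℝ) :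
    StrictMono (Z · τ) := by
  intro b b' hbb'
  rcases lt_or_ge 0 b' with hb' | hb'
  · exact hZ.lt_of_lt_of_pos h hb' hbb' τ
  · simpa using hZ.neg.lt_of_lt_of_pos h.neg (neg_pos.2 (hbb'.trans_le hb')) (neg_lt_neg hbb') τ

theorem surjective (h : DissipativeStrip K L) (hZ : EntryFamily K Z) (τ : ℝ) :
    Function.Surjective (Z · τ) := by
  intro z
  obtain ⟨ζ, rfl, hζ⟩ := h.exists_solution τ z
  suffices ∃ b, Z b = ζ from this.imp fun b hb => congrFun hb τ
  by_cases htop : ∃ s, 1 ≤ ζ s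
  · obtain ⟨t, ht⟩ := h.exists_eq_one hζ htop.choose_spec
    exact ⟨_, h.solution_unique (hZ.solution _) hζ ((hZ.exp_eq_one t).trans ht.symm)⟩
  by_cases hbot : ∃ s, ζ s ≤ -1
  · obtain ⟨t, ht⟩ := h.exists_eq_neg_one hζ hbot.choose_spec
    exact ⟨_, h.solution_unique (hZ.solution _) hζ ((hZ.neg_exp_eq_neg_one t).trans ht.symm)⟩
  · push Not at htop hbot
    exact ⟨0, h.bounded_solution_unique (hZ.solution 0) hζ hZ.bounded
      fun s => abs_lt.2 ⟨hbot s, htop s⟩⟩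

theorem continuous (h : DissipativeStrip K L) (hZ : EntryFamily K Z) :
    Continuous (Function.uncurry Z) :=
  continuous_uncurry_of_strictMono_of_surjective (fun b => (hZ.solution b).continuous)
    (hZ.strictMono h) (hZ.surjective h)

theorem abs_le_one_iff (h : DissipativeStrip K L) (hZ : EntryFamily K Z) {τ b : ℝ} :
    |Z b τ| ≤ 1 ↔ |b| ≤ Real.exp τ := by
  rw [abs_le, abs_le, ← (hZ.strictMono h τ).le_iff_le (a := b), hZ.exp_eq_one,
    ← (hZ.strictMono h τ).le_iff_le (b := b), hZ.neg_exp_eq_neg_one]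

end EntryFamily

/-! ### Bending level sets into orbits -/

theorem isHomeomorph_of_norm_eq {E F : Type*} [NormedAddCommGroup E] [NormedAddCommGroup F]
    [ProperSpace E] [ProperSpace F] {f : E → F} (hf : Continuous f)
    (hbij : Function.Bijective f) (hnorm : ∀ p, ‖f p‖ = ‖p‖) : IsHomeomorph f := by
  refine isHomeomorph_iff_continuous_isClosedMap_bijective.2 ⟨hf, ?_, hbij⟩
  refine (isProperMap_iff_tendsto_cocompact.2 ⟨hf, ?_⟩).isClosedMap
  rw [← Metric.cobounded_eq_cocompact, ← Metric.cobounded_eq_cocompact,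
    ← tendsto_norm_atTop_iff_cobounded]
  simpa only [hnorm] using tendsto_norm_cobounded_atTop

/-- The map that turns horizontal lines in the wedge `|w| ≤ u` into the graphs of
`w = u * Z b (log u)`, and is the identity outside this wedge. The two regimes are combined by
writing `max u |b|` instead of `u`. -/
def wedgeMap (Z : ℝ → ℝ → ℝ) (p : ℝ × ℝ) : ℝ × ℝ :=
  (p.1, max p.1 |p.2| * Z p.2 (Real.log (max p.1 |p.2|)))

namespace EntryFamily

variable {K Z : ℝ → ℝ → ℝ} {L : ℝ≥0} {p : ℝ × ℝ} {u b : ℝ}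

theorem abs_mul_le (h : DissipativeStrip K L) (hZ : EntryFamily K Z) (hb : |b| ≤ u) :
    |u * Z b (Real.log u)| ≤ u := by
  rcases ((abs_nonneg b).trans hb).eq_or_lt with rfl | hu
  · simp
  · rw [abs_mul, abs_of_pos hu]
    exact mul_le_of_le_one_right hu.le ((hZ.abs_le_one_iff h).2 (by rwa [Real.exp_log hu]))

theorem wedgeMap_eq_self (hZ : EntryFamily K Z) (hp : p.1 ≤ |p.2|) : wedgeMap Z p = p := by
  rw [wedgeMap, max_eq_right hp]
  refine Prod.ext rfl ?_
  rcases lt_trichotomy p.2 0 with hneg | hzero | hpos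
  · simp [abs_of_neg hneg, -Real.log_neg_eq_log, hZ.eq_neg_one _ hneg]
  · simp [hzero]
  · simp [abs_of_pos hpos, hZ.eq_one _ hpos]

theorem wedgeMap_of_abs_le (Z : ℝ → ℝ → ℝ) (hp : |p.2| ≤ p.1) :
    wedgeMap Z p = (p.1, p.1 * Z p.2 (Real.log p.1)) := by
  rw [wedgeMap, max_eq_left hp]

theorem continuous_wedgeMap (h : DissipativeStrip K L) (hZ : EntryFamily K Z) :
    Continuous (wedgeMap Z) := by
  refine continuous_fst.prodMk ?_
  set m : ℝ × ℝ → ℝ := fun p => max p.1 |p.2|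
  have hm : Continuous m := by fun_prop
  have hle (p : ℝ × ℝ) : |m p * Z p.2 (Real.log (m p))| ≤ m p :=
    hZ.abs_mul_le h (le_max_right p.1 |p.2|)
  refine continuous_iff_continuousAt.2 fun p => ?_
  by_cases hp : m p = 0
  · have hlim : Tendsto m (𝓝 p) (𝓝 0) := hp ▸ hm.tendsto p
    change Tendsto (fun p => m p * Z p.2 (Real.log (m p))) (𝓝 p) (𝓝 (m p * Z p.2 (Real.log (m p))))
    rw [hp, zero_mul]
    exact squeeze_zero_norm hle hlim
  · exact hm.continuousAt.mul ((hZ.continuous h).continuousAt.comp₂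
      continuousAt_snd (hm.continuousAt.log hp))

theorem norm_wedgeMap (h : DissipativeStrip K L) (hZ : EntryFamily K Z) (p : ℝ × ℝ) :
    ‖wedgeMap Z p‖ = ‖p‖ := by
  rcases le_total p.1 |p.2| with hp | hp
  · rw [hZ.wedgeMap_eq_self hp]
  · have hp₁ : |p.1| = p.1 := abs_of_nonneg ((abs_nonneg _).trans hp)
    rw [wedgeMap_of_abs_le Z hp, Prod.norm_mk, Prod.norm_def, Real.norm_eq_abs, Real.norm_eq_abs,
      Real.norm_eq_abs, hp₁, max_eq_left (hZ.abs_mul_le h hp), max_eq_left hp]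

theorem wedgeMap_injective (h : DissipativeStrip K L) (hZ : EntryFamily K Z) :
    Function.Injective (wedgeMap Z) := by
  have inside {a b b' : ℝ} (hb : |b| ≤ a) (heq : wedgeMap Z (a, b) = wedgeMap Z (a, b')) :
      b = b' := by
    rcases le_or_gt |b'| a with hb' | hb'
    · rcases ((abs_nonneg b).trans hb).eq_or_lt with rfl | ha
      · rw [abs_nonpos_iff.1 hb, abs_nonpos_iff.1 hb']
      · rw [wedgeMap_of_abs_le Z hb, wedgeMap_of_abs_le Z hb'] at heq
        exact (hZ.strictMono h _).injective (mul_left_cancel₀ ha.ne' (congrArg Prod.snd heq))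
    · rw [wedgeMap_of_abs_le Z hb, hZ.wedgeMap_eq_self hb'.le] at heq
      have hsnd : a * Z b (Real.log a) = b' := congrArg Prod.snd heq
      exact absurd (hsnd ▸ hZ.abs_mul_le h hb) hb'.not_ge
  rintro ⟨a, b⟩ ⟨a', b'⟩ heq
  obtain rfl : a = a' := congrArg Prod.fst heq
  rcases le_or_gt |b| a with hb | hb
  · rw [inside hb heq]
  rcases le_or_gt |b'| a with hb' | hb'
  · rw [inside hb' heq.symm]
  · rwa [hZ.wedgeMap_eq_self hb.le, hZ.wedgeMap_eq_self hb'.le] at heq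

theorem wedgeMap_surjective (h : DissipativeStrip K L) (hZ : EntryFamily K Z) :
    Function.Surjective (wedgeMap Z) := by
  rintro ⟨a, c⟩
  rcases le_or_gt a |c| with hc | hc
  · exact ⟨_, hZ.wedgeMap_eq_self hc⟩
  · have ha : 0 < a := (abs_nonneg c).trans_lt hc
    obtain ⟨b, hb⟩ := hZ.surjective h (Real.log a) (c / a)
    have hba : |b| ≤ a := by
      rw [← Real.exp_log ha, ← hZ.abs_le_one_iff h]
      simpa only [hb, abs_div, abs_of_pos ha] using (div_le_one ha).2 hc.le
    refine ⟨(a, b), ?_⟩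
    rw [wedgeMap_of_abs_le Z hba]
    exact Prod.ext rfl ((congrArg (a * ·) hb).trans (mul_div_cancel₀ c ha.ne'))

theorem isHomeomorph_wedgeMap (h : DissipativeStrip K L) (hZ : EntryFamily K Z) :
    IsHomeomorph (wedgeMap Z) :=
  isHomeomorph_of_norm_eq (hZ.continuous_wedgeMap h)
    ⟨hZ.wedgeMap_injective h, hZ.wedgeMap_surjective h⟩ (hZ.norm_wedgeMap h)

end EntryFamily

/-- The map that bends the level sets of `min u w` in the half plane `0 ≤ u + w` into orbits of a
saddle: horizontal lines in the wedge `|w| ≤ u` follow `Z₁`, vertical lines in the wedge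
`|u| ≤ w` follow `Z₂`. -/
def bendMap (Z₁ Z₂ : ℝ → ℝ → ℝ) : ℝ × ℝ → ℝ × ℝ :=
  wedgeMap Z₁ ∘ Prod.swap ∘ wedgeMap Z₂ ∘ Prod.swap

section BendMap

variable {K₁ K₂ Z₁ Z₂ : ℝ → ℝ → ℝ} {L₁ L₂ : ℝ≥0} {p : ℝ × ℝ} {u w : ℝ}

theorem isHomeomorph_bendMap (h₁ : DissipativeStrip K₁ L₁) (h₂ : DissipativeStrip K₂ L₂)
    (hZ₁ : EntryFamily K₁ Z₁) (hZ₂ : EntryFamily K₂ Z₂) : IsHomeomorph (bendMap Z₁ Z₂) :=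
  have hswap : IsHomeomorph (Prod.swap : ℝ × ℝ → ℝ × ℝ) := (Homeomorph.prodComm ℝ ℝ).isHomeomorph
  (hZ₁.isHomeomorph_wedgeMap h₁).comp
    (hswap.comp ((hZ₂.isHomeomorph_wedgeMap h₂).comp hswap))

theorem bendMap_of_abs_le_fst (Z₁ : ℝ → ℝ → ℝ) (hZ₂ : EntryFamily K₂ Z₂) (h : |w| ≤ u) :
    bendMap Z₁ Z₂ (u, w) = (u, u * Z₁ w (Real.log u)) := by
  have hw : w ≤ |u| := (le_abs_self w).trans (h.trans (le_abs_self u))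
  simp only [bendMap, Function.comp_apply, Prod.swap_prod_mk]
  rw [hZ₂.wedgeMap_eq_self (p := (w, u)) hw]
  exact EntryFamily.wedgeMap_of_abs_le Z₁ h

theorem bendMap_of_abs_le_snd (h₂ : DissipativeStrip K₂ L₂) (hZ₁ : EntryFamily K₁ Z₁)
    (hZ₂ : EntryFamily K₂ Z₂) (h : |u| ≤ w) :
    bendMap Z₁ Z₂ (u, w) = (w * Z₂ u (Real.log w), w) := by
  simp only [bendMap, Function.comp_apply, Prod.swap_prod_mk]
  rw [EntryFamily.wedgeMap_of_abs_le (p := (w, u)) Z₂ h]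
  exact hZ₁.wedgeMap_eq_self
    ((le_abs_self _).trans ((hZ₂.abs_mul_le h₂ h).trans (le_abs_self w)))

theorem bendMap_eq_self (hZ₁ : EntryFamily K₁ Z₁) (hZ₂ : EntryFamily K₂ Z₂)
    (hp : p.1 + p.2 ≤ 0) : bendMap Z₁ Z₂ p = p := by
  have hfst : p.1 ≤ |p.2| := by linarith [neg_le_abs p.2]
  have hsnd : p.2 ≤ |p.1| := by linarith [neg_le_abs p.1]
  simp only [bendMap, Function.comp_apply]
  rw [hZ₂.wedgeMap_eq_self (p := p.swap) hsnd, Prod.swap_swap, hZ₁.wedgeMap_eq_self hfst]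

end BendMap

/-! ### The slope equation of a saddle -/

/-- The linear saddle `(u, w) ↦ (lam * u, -mu * w)` perturbed by `R`. -/
def saddleField (lam mu : ℝ) (R : ℝ × ℝ → ℝ × ℝ) (p : ℝ × ℝ) : ℝ × ℝ :=
  (lam * p.1, -mu * p.2) + R p

/-- A perturbation `R` of a linear saddle whose Lipschitz constant `ε` is so small that the slopes
`w / u` of orbits in the wedge `|w| ≤ u`, and the slopes `u / w` in the wedge `|u| ≤ w` after time
reversal, satisfy a dissipative equation. -/
structure SaddleSystem (lam mu : ℝ) (ε : ℝ≥0) (R : ℝ × ℝ → ℝ × ℝ) : Prop where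
  lipschitz : LipschitzWith ε R
  map_zero : R 0 = 0
  lt_lam : ε < lam
  lt_mu : ε < mu
  small_fst : (mu + ε) * ε ≤ (lam - ε) ^ 2 / 2
  small_snd : (lam + ε) * ε ≤ (mu - ε) ^ 2 / 2

/-- The perturbation that results from reversing time and exchanging the two axes. -/
def reversePerturbation (R : ℝ × ℝ → ℝ × ℝ) (p : ℝ × ℝ) : ℝ × ℝ := -(R p.swap).swap

/-- Truncation of the slope to `[-1, 1]`. -/
def clamp (z : ℝ) : ℝ := projIcc (-1 : ℝ) 1 (by norm_num) z

theorem abs_clamp_le_one (z : ℝ) : |clamp z| ≤ 1 := abs_le.2 (projIcc (-1 : ℝ) 1 _ z).2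

theorem clamp_of_abs_le_one {z : ℝ} (hz : |z| ≤ 1) : clamp z = z :=
  congrArg Subtype.val (projIcc_of_mem _ (abs_le.1 hz))

theorem clamp_of_one_le {z : ℝ} (hz : 1 ≤ z) : clamp z = 1 :=
  congrArg Subtype.val (projIcc_of_right_le _ hz)

theorem clamp_of_le_neg_one {z : ℝ} (hz : z ≤ -1) : clamp z = -1 :=
  congrArg Subtype.val (projIcc_of_le_left _ hz)

theorem continuous_clamp : Continuous clamp := continuous_subtype_val.comp continuous_projIcc

theorem lipschitzWith_inv_smul_comp_smul {E F : Type*} [NormedAddCommGroup E] [NormedSpace ℝ E]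
    [NormedAddCommGroup F] [NormedSpace ℝ F] {R : E → F} {ε : ℝ≥0} (hR : LipschitzWith ε R)
    {c : ℝ} (hc : c ≠ 0) : LipschitzWith ε fun x => c⁻¹ • R (c • x) := by
  refine LipschitzWith.of_dist_le_mul fun x y => ?_
  calc dist (c⁻¹ • R (c • x)) (c⁻¹ • R (c • y)) = ‖c‖⁻¹ * dist (R (c • x)) (R (c • y)) := by
        rw [dist_smul₀, norm_inv]
    _ ≤ ‖c‖⁻¹ * (ε * (‖c‖ * dist x y)) := by
        rw [← dist_smul₀]
        gcongr
        exact hR.dist_le_mul _ _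
    _ = ε * dist x y := by field_simp

/-- The perturbation at the point of the wedge `|w| ≤ u` with `log u = τ` and slope `z`, divided
by `u`. -/
def blowUp (R : ℝ × ℝ → ℝ × ℝ) (τ z : ℝ) : ℝ × ℝ :=
  (Real.exp τ)⁻¹ • R (Real.exp τ • (1, clamp z))

/-- The derivative of `log u` along orbits, in the coordinates `τ = log u` and `z = w / u`. -/
def growthRate (lam : ℝ) (R : ℝ × ℝ → ℝ × ℝ) (τ z : ℝ) : ℝ := lam + (blowUp R τ z).1

/-- The derivative of `w` along orbits divided by `u`, in the coordinates `τ = log u` and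
`z = w / u`. -/
def heightRate (mu : ℝ) (R : ℝ × ℝ → ℝ × ℝ) (τ z : ℝ) : ℝ := -mu * clamp z + (blowUp R τ z).2

/-- The derivative of the slope `z = w / u` of an orbit with respect to `τ = log u`. -/
def slopeRate (lam mu : ℝ) (R : ℝ × ℝ → ℝ × ℝ) (τ z : ℝ) : ℝ :=
  heightRate mu R τ z / growthRate lam R τ z - clamp z

namespace SaddleSystem

variable {lam mu : ℝ} {ε : ℝ≥0} {R : ℝ × ℝ → ℝ × ℝ}

theorem mu_pos (h : SaddleSystem lam mu ε R) : 0 < mu := ε.coe_nonneg.trans_lt h.lt_mu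

theorem reverse (h : SaddleSystem lam mu ε R) :
    SaddleSystem mu lam ε (reversePerturbation R) where
  lipschitz := LipschitzWith.of_dist_le_mul fun x y => by
    simpa only [reversePerturbation, dist_neg_neg, Prod.dist_eq, Prod.fst_swap, Prod.snd_swap,
      max_comm] using h.lipschitz.dist_le_mul x.swap y.swap
  map_zero := by simp [reversePerturbation, h.map_zero]
  lt_lam := h.lt_mu
  lt_mu := h.lt_lam
  small_fst := h.small_snd
  small_snd := h.small_fst

theorem exists_lipschitzWith_saddleField (h : SaddleSystem lam mu ε R) :
    ∃ C, LipschitzWith C (saddleField lam mu R) :=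
  ⟨_, ((lam • ContinuousLinearMap.fst ℝ ℝ ℝ).prod
    ((-mu) • ContinuousLinearMap.snd ℝ ℝ ℝ)).lipschitz.add h.lipschitz⟩

theorem saddleField_zero (h : SaddleSystem lam mu ε R) : saddleField lam mu R 0 = 0 := by
  simp [saddleField, h.map_zero]

theorem norm_blowUp_le (h : SaddleSystem lam mu ε R) (τ z : ℝ) : ‖blowUp R τ z‖ ≤ ε := by
  have hle := (lipschitzWith_inv_smul_comp_smul h.lipschitz (Real.exp_ne_zero τ)).dist_le_mul
    (1, clamp z) 0
  simpa [h.map_zero, Prod.norm_mk, abs_clamp_le_one, blowUp] using hle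

theorem norm_blowUp_sub_le (h : SaddleSystem lam mu ε R) (τ z z' : ℝ) :
    ‖blowUp R τ z' - blowUp R τ z‖ ≤ ε * |clamp z' - clamp z| := by
  have hle := (lipschitzWith_inv_smul_comp_smul h.lipschitz (Real.exp_ne_zero τ)).dist_le_mul
    (1, clamp z') (1, clamp z)
  rwa [dist_eq_norm, dist_prod_same_left, Real.dist_eq] at hle

theorem continuous_blowUp (h : SaddleSystem lam mu ε R) :
    Continuous fun p : ℝ × ℝ => blowUp R p.1 p.2 := by
  have hexp : Continuous fun p : ℝ × ℝ => Real.exp p.1 := Real.continuous_exp.comp continuous_fst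
  exact (hexp.inv₀ fun p => Real.exp_ne_zero p.1).smul (h.lipschitz.continuous.comp
    (hexp.smul (continuous_const.prodMk (continuous_clamp.comp continuous_snd))))

theorem growthRate_mem (h : SaddleSystem lam mu ε R) (τ z : ℝ) :
    growthRate lam R τ z ∈ Icc (lam - ε) (lam + ε) := by
  have := abs_le.1 ((norm_fst_le _).trans (h.norm_blowUp_le τ z))
  constructor <;> unfold growthRate <;> linarith

theorem growthRate_pos (h : SaddleSystem lam mu ε R) (τ z : ℝ) : 0 < growthRate lam R τ z :=
  (sub_pos.2 h.lt_lam).trans_le (h.growthRate_mem τ z).1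

theorem continuous_growthRate (h : SaddleSystem lam mu ε R) :
    Continuous fun p : ℝ × ℝ => growthRate lam R p.1 p.2 :=
  continuous_const.add h.continuous_blowUp.fst

theorem abs_heightRate_le (h : SaddleSystem lam mu ε R) (τ z : ℝ) :
    |heightRate mu R τ z| ≤ mu + ε := by
  have hlin : |-mu * clamp z| ≤ mu := by
    rw [abs_mul, abs_neg, abs_of_pos h.mu_pos]
    exact mul_le_of_le_one_right h.mu_pos.le (abs_clamp_le_one z)
  exact (abs_add_le _ _).trans (add_le_add hlin ((norm_snd_le _).trans (h.norm_blowUp_le τ z)))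

theorem abs_heightRate_sub_add_le (h : SaddleSystem lam mu ε R) (τ z z' : ℝ) :
    |heightRate mu R τ z' - heightRate mu R τ z + mu * (clamp z' - clamp z)| ≤
      ε * |clamp z' - clamp z| := by
  have hsnd : heightRate mu R τ z' - heightRate mu R τ z + mu * (clamp z' - clamp z) =
      (blowUp R τ z' - blowUp R τ z).2 := by
    rw [heightRate, heightRate, Prod.snd_sub]
    ring
  rw [hsnd]
  exact (norm_snd_le _).trans (h.norm_blowUp_sub_le τ z z')

theorem abs_heightRate_div_sub_le (h : SaddleSystem lam mu ε R) (τ z z' : ℝ) :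
    |heightRate mu R τ z / growthRate lam R τ z' - heightRate mu R τ z / growthRate lam R τ z| ≤
      |clamp z' - clamp z| / 2 := by
  have hpos := h.growthRate_pos τ z
  have hpos' := h.growthRate_pos τ z'
  have hdiff : |growthRate lam R τ z - growthRate lam R τ z'| ≤ ε * |clamp z' - clamp z| := by
    rw [abs_sub_comm]
    simpa [growthRate] using (norm_fst_le _).trans (h.norm_blowUp_sub_le τ z z')
  have hsq : (lam - ε) ^ 2 ≤ growthRate lam R τ z' * growthRate lam R τ z := by
    rw [sq]
    exact mul_le_mul (h.growthRate_mem τ z').1 (h.growthRate_mem τ z).1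
      (sub_pos.2 h.lt_lam).le hpos'.le
  rw [div_sub_div _ _ hpos'.ne' hpos.ne', mul_comm (growthRate lam R τ z'), ← mul_sub, abs_div,
    abs_mul, abs_of_pos (mul_pos hpos' hpos), div_le_iff₀ (mul_pos hpos' hpos)]
  calc |heightRate mu R τ z| * |growthRate lam R τ z - growthRate lam R τ z'|
      ≤ (mu + ε) * (ε * |clamp z' - clamp z|) :=
        mul_le_mul (h.abs_heightRate_le τ z) hdiff (abs_nonneg _)
          (add_nonneg h.mu_pos.le ε.coe_nonneg)
    _ = (mu + ε) * ε * |clamp z' - clamp z| := by ring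
    _ ≤ growthRate lam R τ z' * growthRate lam R τ z / 2 * |clamp z' - clamp z| := by
        gcongr
        linarith [h.small_fst]
    _ = |clamp z' - clamp z| / 2 * (growthRate lam R τ z' * growthRate lam R τ z) := by ring

theorem slopeRate_sub (lam mu : ℝ) (R : ℝ × ℝ → ℝ × ℝ) (τ z z' : ℝ) :
    slopeRate lam mu R τ z' - slopeRate lam mu R τ z =
      (heightRate mu R τ z' - heightRate mu R τ z) / growthRate lam R τ z' +
      (heightRate mu R τ z / growthRate lam R τ z' - heightRate mu R τ z / growthRate lam R τ z) -
      (clamp z' - clamp z) := by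
  unfold slopeRate
  ring

theorem continuous_slopeRate (h : SaddleSystem lam mu ε R) :
    Continuous fun p : ℝ × ℝ => slopeRate lam mu R p.1 p.2 :=
  (((continuous_const.mul (continuous_clamp.comp continuous_snd)).add
    h.continuous_blowUp.snd).div h.continuous_growthRate
    fun p => (h.growthRate_pos p.1 p.2).ne').sub (continuous_clamp.comp continuous_snd)

theorem abs_slopeRate_sub_le (h : SaddleSystem lam mu ε R) (τ z z' : ℝ) :
    |slopeRate lam mu R τ z' - slopeRate lam mu R τ z| ≤
      ((mu + ε) / (lam - ε) + 2) * |z' - z| := by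
  have hgap : 0 < lam - ε := sub_pos.2 h.lt_lam
  have hmu := h.mu_pos
  have hheight : |heightRate mu R τ z' - heightRate mu R τ z| ≤
      (mu + ε) * |clamp z' - clamp z| := by
    have hle := (abs_sub_abs_le_abs_sub _ (-(mu * (clamp z' - clamp z)))).trans
      ((sub_neg_eq_add _ (mu * _) ▸ h.abs_heightRate_sub_add_le τ z z'))
    rw [abs_neg, abs_mul, abs_of_pos hmu] at hle
    linarith
  have hquot : |(heightRate mu R τ z' - heightRate mu R τ z) / growthRate lam R τ z'| ≤
      (mu + ε) / (lam - ε) * |clamp z' - clamp z| := by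
    rw [abs_div, abs_of_pos (h.growthRate_pos τ z'), div_mul_eq_mul_div]
    exact div_le_div₀ (by positivity) hheight hgap (h.growthRate_mem τ z').1
  calc |slopeRate lam mu R τ z' - slopeRate lam mu R τ z|
      ≤ (mu + ε) / (lam - ε) * |clamp z' - clamp z| + |clamp z' - clamp z| / 2
        + |clamp z' - clamp z| := by
        rw [slopeRate_sub, sub_eq_add_neg _ (clamp z' - clamp z)]
        exact (abs_add_three _ _ _).trans (add_le_add
          (add_le_add hquot (h.abs_heightRate_div_sub_le τ z z')) (abs_neg _).le)
    _ ≤ ((mu + ε) / (lam - ε) + 2) * |clamp z' - clamp z| := by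
        linarith [abs_nonneg (clamp z' - clamp z)]
    _ ≤ ((mu + ε) / (lam - ε) + 2) * |z' - z| :=
        mul_le_mul_of_nonneg_left (abs_projIcc_sub_projIcc _) (by positivity)

theorem slopeRate_contract (h : SaddleSystem lam mu ε R) (τ : ℝ) {z z' : ℝ} (hz : -1 ≤ z)
    (hzz' : z ≤ z') (hz' : z' ≤ 1) :
    slopeRate lam mu R τ z' - slopeRate lam mu R τ z ≤ -(z' - z) / 2 := by
  have hclamp : clamp z' - clamp z = z' - z := by
    rw [clamp_of_abs_le_one (abs_le.2 ⟨hz, hzz'.trans hz'⟩),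
      clamp_of_abs_le_one (abs_le.2 ⟨hz.trans hzz', hz'⟩)]
  have habs : |z' - z| = z' - z := abs_of_nonneg (sub_nonneg.2 hzz')
  have hheight := (abs_le.1 (h.abs_heightRate_sub_add_le τ z z')).2
  have hdiv := (abs_le.1 (h.abs_heightRate_div_sub_le τ z z')).2
  rw [hclamp, habs] at hheight hdiv
  have hquot : (heightRate mu R τ z' - heightRate mu R τ z) / growthRate lam R τ z' ≤ 0 :=
    div_nonpos_of_nonpos_of_nonneg
      (by linarith [mul_le_mul_of_nonneg_right h.lt_mu.le (sub_nonneg.2 hzz')])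
      (h.growthRate_pos τ z').le
  rw [slopeRate_sub, hclamp]
  linarith

theorem slopeRate_le_neg_one (h : SaddleSystem lam mu ε R) (τ : ℝ) {z : ℝ} (hz : 1 ≤ z) :
    slopeRate lam mu R τ z ≤ -1 := by
  have hsnd := (abs_le.1 ((norm_snd_le _).trans (h.norm_blowUp_le τ z))).2
  have hquot : heightRate mu R τ z / growthRate lam R τ z ≤ 0 := by
    refine div_nonpos_of_nonpos_of_nonneg ?_ (h.growthRate_pos τ z).le
    rw [heightRate, clamp_of_one_le hz]
    linarith [h.lt_mu]
  rw [slopeRate, clamp_of_one_le hz]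
  linarith

theorem one_le_slopeRate (h : SaddleSystem lam mu ε R) (τ : ℝ) {z : ℝ} (hz : z ≤ -1) :
    1 ≤ slopeRate lam mu R τ z := by
  have hsnd := (abs_le.1 ((norm_snd_le _).trans (h.norm_blowUp_le τ z))).1
  have hquot : 0 ≤ heightRate mu R τ z / growthRate lam R τ z := by
    refine div_nonneg ?_ (h.growthRate_pos τ z).le
    rw [heightRate, clamp_of_le_neg_one hz]
    linarith [h.lt_mu]
  rw [slopeRate, clamp_of_le_neg_one hz]
  linarith

theorem dissipativeStrip_slopeRate (h : SaddleSystem lam mu ε R) :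
    DissipativeStrip (slopeRate lam mu R) ((mu + ε) / (lam - ε) + 2).toNNReal where
  continuous z := h.continuous_slopeRate.comp (by fun_prop : Continuous fun τ : ℝ => (τ, z))
  lipschitz τ := LipschitzWith.of_dist_le_mul fun z' z =>
    (h.abs_slopeRate_sub_le τ z z').trans
      (mul_le_mul_of_nonneg_right (Real.le_coe_toNNReal _) (abs_nonneg _))
  le_neg_one τ _ hz := h.slopeRate_le_neg_one τ hz
  one_le τ _ hz := h.one_le_slopeRate τ hz
  contract τ _ _ hz hzz' hz' := h.slopeRate_contract τ hz hzz' hz'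

end SaddleSystem

/-! ### Orbits from slopes -/

/-- The curve whose slope `w / u` is `ζ τ` at the point with `log u = τ`. -/
def slopeCurve (ζ : ℝ → ℝ) (τ : ℝ) : ℝ × ℝ := Real.exp τ • (1, ζ τ)

/-- The time an orbit with slope `ζ` takes to move from `log u = 0` to `log u = x`. -/
def transitTime (lam : ℝ) (R : ℝ × ℝ → ℝ × ℝ) (ζ : ℝ → ℝ) (x : ℝ) : ℝ :=
  ∫ s in (0 : ℝ)..x, (growthRate lam R s (ζ s))⁻¹

theorem saddleField_exp_smul (lam mu : ℝ) (R : ℝ × ℝ → ℝ × ℝ) (τ : ℝ) {z : ℝ} (hz : |z| ≤ 1) :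
    saddleField lam mu R (Real.exp τ • (1, z)) =
      Real.exp τ • (growthRate lam R τ z, heightRate mu R τ z) := by
  have hR : Real.exp τ • blowUp R τ z = R (Real.exp τ • (1, z)) := by
    rw [blowUp, smul_inv_smul₀ (Real.exp_ne_zero τ), clamp_of_abs_le_one hz]
  rw [saddleField, ← hR, growthRate, heightRate, clamp_of_abs_le_one hz]
  ext <;> simp only [Prod.fst_add, Prod.snd_add, Prod.smul_fst, Prod.smul_snd, smul_eq_mul] <;> ring

theorem isIntegralCurve_swap_comp_neg {lam mu : ℝ} {R : ℝ × ℝ → ℝ × ℝ} {γ : ℝ → ℝ × ℝ}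
    (hγ : IsIntegralCurve γ fun _ => saddleField lam mu R) :
    IsIntegralCurve (fun t => (γ (-t)).swap)
      fun _ => saddleField mu lam (reversePerturbation R) := by
  intro t
  have hneg : HasDerivAt (fun t => γ (-t)) ((-1 : ℝ) • saddleField lam mu R (γ (-t))) t :=
    (hγ (-t)).scomp t (hasDerivAt_neg t)
  refine ((ContinuousLinearEquiv.prodComm ℝ ℝ ℝ).toContinuousLinearMap.hasFDerivAt.comp_hasDerivAt t
    hneg).congr_deriv ?_
  ext <;> simp [saddleField, reversePerturbation]

namespace SaddleSystem

variable {lam mu : ℝ} {ε : ℝ≥0} {R : ℝ × ℝ → ℝ × ℝ} {ζ : ℝ → ℝ} {Z : ℝ → ℝ → ℝ} {b : ℝ}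

theorem continuous_inv_growthRate (h : SaddleSystem lam mu ε R) (hζ : Continuous ζ) :
    Continuous fun s => (growthRate lam R s (ζ s))⁻¹ :=
  (h.continuous_growthRate.comp (continuous_id.prodMk hζ)).inv₀
    fun s => (h.growthRate_pos s (ζ s)).ne'

theorem hasDerivAt_transitTime (h : SaddleSystem lam mu ε R) (hζ : Continuous ζ) (x : ℝ) :
    HasDerivAt (transitTime lam R ζ) (growthRate lam R x (ζ x))⁻¹ x :=
  have hc := h.continuous_inv_growthRate hζ
  intervalIntegral.integral_hasDerivAt_right (hc.intervalIntegrable _ _)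
    (hc.stronglyMeasurableAtFilter _ _) hc.continuousAt

theorem continuous_transitTime (h : SaddleSystem lam mu ε R) (hζ : Continuous ζ) :
    Continuous (transitTime lam R ζ) :=
  continuous_iff_continuousAt.2 fun x => (h.hasDerivAt_transitTime hζ x).continuousAt

theorem strictMono_transitTime (h : SaddleSystem lam mu ε R) (hζ : Continuous ζ) :
    StrictMono (transitTime lam R ζ) :=
  strictMono_of_hasDerivAt_pos (h.hasDerivAt_transitTime hζ)
    fun x => inv_pos.2 (h.growthRate_pos x (ζ x))

theorem tendsto_transitTime (h : SaddleSystem lam mu ε R) (hζ : Continuous ζ) :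
    Tendsto (transitTime lam R ζ) atTop atTop := by
  have hpos : 0 < lam + ε := (h.growthRate_pos 0 0).trans_le (h.growthRate_mem 0 0).2
  refine tendsto_atTop_mono' atTop ?_ (tendsto_id.const_mul_atTop (inv_pos.2 hpos))
  filter_upwards [eventually_ge_atTop 0] with x hx
  calc (lam + ε)⁻¹ * x = ∫ _ in (0 : ℝ)..x, (lam + ε)⁻¹ := by
        rw [intervalIntegral.integral_const, smul_eq_mul, sub_zero, mul_comm]
    _ ≤ transitTime lam R ζ x :=
        intervalIntegral.integral_mono_on hx intervalIntegrable_const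
          ((h.continuous_inv_growthRate hζ).intervalIntegrable _ _)
          fun s _ => inv_anti₀ (h.growthRate_pos s (ζ s)) (h.growthRate_mem s (ζ s)).2

theorem exists_transitTime_eq (h : SaddleSystem lam mu ε R) (hζ : Continuous ζ) {x s : ℝ}
    (hs : transitTime lam R ζ x < s) : ∃ y, x < y ∧ transitTime lam R ζ y = s := by
  obtain ⟨y, hy, hxy⟩ := (((h.tendsto_transitTime hζ).eventually_ge_atTop s).and
    (eventually_ge_atTop x)).exists
  obtain ⟨c, -, hc⟩ := intermediate_value_Icc hxy (h.continuous_transitTime hζ).continuousOn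
    ⟨hs.le, hy⟩
  exact ⟨c, (h.strictMono_transitTime hζ).lt_iff_lt.1 (hc ▸ hs), hc⟩

theorem hasDerivAt_slopeCurve (h : SaddleSystem lam mu ε R)
    (hζ : IsIntegralCurve ζ (slopeRate lam mu R)) {τ : ℝ} (hτ : |ζ τ| ≤ 1) :
    HasDerivAt (slopeCurve ζ)
      ((growthRate lam R τ (ζ τ))⁻¹ • saddleField lam mu R (slopeCurve ζ τ)) τ := by
  have hrate := (h.growthRate_pos τ (ζ τ)).ne'
  refine ((Real.hasDerivAt_exp τ).smul
    ((hasDerivAt_const τ (1 : ℝ)).prodMk (hζ τ))).congr_deriv ?_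
  rw [slopeCurve, saddleField_exp_smul lam mu R τ hτ, slopeRate, clamp_of_abs_le_one hτ]
  ext <;> simp only [Prod.fst_add, Prod.snd_add, Prod.smul_fst, Prod.smul_snd, smul_eq_mul] <;>
    field_simp <;> ring

theorem eq_slopeCurve_of_isIntegralCurve (h : SaddleSystem lam mu ε R)
    (hZ : EntryFamily (slopeRate lam mu R) Z) {γ : ℝ → ℝ × ℝ}
    (hγ : IsIntegralCurve γ fun _ => saddleField lam mu R) {t₀ x₀ x : ℝ}
    (h₀ : γ t₀ = slopeCurve (Z b) x₀) (hx₀ : |b| ≤ Real.exp x₀) (hx : |b| ≤ Real.exp x) :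
    γ (t₀ + (transitTime lam R (Z b) x - transitTime lam R (Z b) x₀)) = slopeCurve (Z b) x := by
  set T := transitTime lam R (Z b)
  have hZb : Continuous (Z b) := (hZ.solution b).continuous
  obtain ⟨C, hC⟩ := h.exists_lipschitzWith_saddleField
  have hlip (τ : ℝ) : LipschitzWith ((lam - ε)⁻¹.toNNReal * C)
      fun y => (growthRate lam R τ (Z b τ))⁻¹ • saddleField lam mu R y := by
    have hinv : ‖(growthRate lam R τ (Z b τ))⁻¹‖₊ ≤ (lam - ε)⁻¹.toNNReal := by
      rw [← NNReal.coe_le_coe, coe_nnnorm, Real.norm_of_nonneg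
        (inv_pos.2 (h.growthRate_pos _ _)).le]
      exact (inv_anti₀ (sub_pos.2 h.lt_lam) (h.growthRate_mem _ _).1).trans
        (Real.le_coe_toNNReal _)
    exact ((lipschitzWith_smul _).comp hC).weaken (mul_le_mul_left hinv C)
  have hcurve : IsIntegralCurveOn (slopeCurve (Z b))
      (fun τ y => (growthRate lam R τ (Z b τ))⁻¹ • saddleField lam mu R y)
      {τ | |b| ≤ Real.exp τ} := fun τ hτ =>
    (h.hasDerivAt_slopeCurve (hZ.solution b)
      ((hZ.abs_le_one_iff h.dissipativeStrip_slopeRate).2 hτ)).hasDerivWithinAt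
  have hreparam : IsIntegralCurve (fun x => γ (t₀ + (T x - T x₀)))
      (fun τ y => (growthRate lam R τ (Z b τ))⁻¹ • saddleField lam mu R y) := fun τ =>
    (hγ _).scomp τ (((h.hasDerivAt_transitTime hZb τ).sub_const _).const_add _)
  have hord : {τ | |b| ≤ Real.exp τ}.OrdConnected :=
    ⟨fun _ hs _ _ _ ht => (le_trans hs (Real.exp_le_exp.2 ht.1) :)⟩
  exact eqOn_of_isIntegralCurveOn hlip hord (hreparam.isIntegralCurveOn _) hcurve hx₀
    (by simpa using h₀) hx

end SaddleSystem

theorem exists_isIntegralCurve_eqOn {E : Type*} [NormedAddCommGroup E] [NormedSpace ℝ E]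
    [CompleteSpace E] {v : ℝ → E → E} {K : ℝ≥0} (hv : ∀ t, LipschitzWith K (v t))
    (hc : ∀ x, Continuous fun t => v t x) {γ : ℝ → E} {I : Set ℝ} (hI : I.OrdConnected)
    (hγ : IsIntegralCurveOn γ v I) : ∃ δ, IsIntegralCurve δ v ∧ EqOn γ δ I := by
  rcases I.eq_empty_or_nonempty with rfl | ⟨a, ha⟩
  · obtain ⟨δ, -, hδ⟩ := exists_isIntegralCurve_of_lipschitz hv hc 0 0
    exact ⟨δ, hδ, eqOn_empty _ _⟩
  · obtain ⟨δ, hδa, hδ⟩ := exists_isIntegralCurve_of_lipschitz hv hc a (γ a)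
    exact ⟨δ, hδ, eqOn_of_isIntegralCurveOn hv hI hγ (hδ.isIntegralCurveOn I) ha hδa.symm⟩

/-- Membership in the closed half plane `0 ≤ u + w` without the origin. -/
structure InPuncturedHalfPlane (p : ℝ × ℝ) : Prop where
  sum_nonneg : 0 ≤ p.1 + p.2
  ne_zero : p ≠ 0

namespace InPuncturedHalfPlane

variable {p : ℝ × ℝ}

theorem abs_snd_le (hp : InPuncturedHalfPlane p) (hle : p.2 ≤ p.1) : |p.2| ≤ p.1 :=
  abs_le.2 ⟨by linarith [hp.sum_nonneg], hle⟩

theorem abs_fst_le (hp : InPuncturedHalfPlane p) (hle : p.1 ≤ p.2) : |p.1| ≤ p.2 :=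
  abs_le.2 ⟨by linarith [hp.sum_nonneg], hle⟩

theorem fst_pos (hp : InPuncturedHalfPlane p) (hle : p.2 ≤ p.1) : 0 < p.1 := by
  by_contra! hneg
  have := hp.sum_nonneg
  exact hp.ne_zero (Prod.ext (by simpa using by linarith) (by simpa using by linarith))

theorem snd_pos (hp : InPuncturedHalfPlane p) (hle : p.1 ≤ p.2) : 0 < p.2 := by
  by_contra! hneg
  have := hp.sum_nonneg
  exact hp.ne_zero (Prod.ext (by simpa using by linarith) (by simpa using by linarith))

end InPuncturedHalfPlane

/-- The points `p` and `p'` lie on the same branch of a level set of `min u w` in the punctured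
half plane; only the level sets at height `0 < min u w` are connected. -/
structure SameBranch (p p' : ℝ × ℝ) : Prop where
  mem : InPuncturedHalfPlane p
  mem' : InPuncturedHalfPlane p'
  min_eq : min p.1 p.2 = min p'.1 p'.2
  side : 0 < min p.1 p.2 ∨ (p.2 ≤ p.1 ∧ p'.2 ≤ p'.1) ∨ (p.1 ≤ p.2 ∧ p'.1 ≤ p'.2)

theorem SameBranch.le_of_sub_lt {p p' : ℝ × ℝ} (h : SameBranch p p')
    (hlt : p.1 - p.2 < p'.1 - p'.2) : p.1 ≤ p'.1 ∧ p'.2 ≤ p.2 := by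
  have := h.min_eq
  grind

/-- The families of slopes of the orbits of a saddle in the wedge `|w| ≤ u` and, after time
reversal and exchange of the axes, in the wedge `|u| ≤ w`. -/
structure OrbitFamilies (lam mu : ℝ) (ε : ℝ≥0) (R : ℝ × ℝ → ℝ × ℝ) (Z₁ Z₂ : ℝ → ℝ → ℝ) :
    Prop where
  system : SaddleSystem lam mu ε R
  fst : EntryFamily (slopeRate lam mu R) Z₁
  snd : EntryFamily (slopeRate mu lam (reversePerturbation R)) Z₂

/-- The time at which the orbit that bends `min u w = b` passes the image of `p`, up to an additive
constant. Where `Real.log` takes a junk value, the coordinate in question is constant along the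
orbit, so that the junk cancels in differences. -/
def orbitTime (lam mu : ℝ) (R : ℝ × ℝ → ℝ × ℝ) (Z₁ Z₂ : ℝ → ℝ → ℝ) (b : ℝ) (p : ℝ × ℝ) : ℝ :=
  transitTime lam R (Z₁ b) (Real.log p.1) -
    transitTime mu (reversePerturbation R) (Z₂ b) (Real.log p.2)

namespace OrbitFamilies

variable {lam mu : ℝ} {ε : ℝ≥0} {R : ℝ × ℝ → ℝ × ℝ} {Z₁ Z₂ : ℝ → ℝ → ℝ} {γ : ℝ → ℝ × ℝ}
  {t b : ℝ} {p p' : ℝ × ℝ}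

theorem bendMap_fst_of_isIntegralCurve (h : OrbitFamilies lam mu ε R Z₁ Z₂)
    (hγ : IsIntegralCurve γ fun _ => saddleField lam mu R) {u' : ℝ} (hu : 0 < u) (hu' : 0 < u')
    (hb : |b| ≤ u) (hb' : |b| ≤ u') (ht : γ t = bendMap Z₁ Z₂ (u, b)) :
    γ (t + (transitTime lam R (Z₁ b) (Real.log u') - transitTime lam R (Z₁ b) (Real.log u))) =
      bendMap Z₁ Z₂ (u', b) := by
  have hcurve {v : ℝ} (hv : 0 < v) (hbv : |b| ≤ v) :
      bendMap Z₁ Z₂ (v, b) = slopeCurve (Z₁ b) (Real.log v) := by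
    rw [bendMap_of_abs_le_fst Z₁ h.snd hbv, slopeCurve, Real.exp_log hv, Prod.smul_mk,
      smul_eq_mul, smul_eq_mul, mul_one]
  rw [hcurve hu hb] at ht
  rw [hcurve hu' hb']
  exact h.system.eq_slopeCurve_of_isIntegralCurve h.fst hγ ht (by rwa [Real.exp_log hu])
    (by rwa [Real.exp_log hu'])

theorem bendMap_snd_of_isIntegralCurve (h : OrbitFamilies lam mu ε R Z₁ Z₂)
    (hγ : IsIntegralCurve γ fun _ => saddleField lam mu R) {w' : ℝ} (hw : 0 < w) (hw' : 0 < w')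
    (hb : |b| ≤ w) (hb' : |b| ≤ w') (ht : γ t = bendMap Z₁ Z₂ (b, w)) :
    γ (t - (transitTime mu (reversePerturbation R) (Z₂ b) (Real.log w') -
        transitTime mu (reversePerturbation R) (Z₂ b) (Real.log w))) =
      bendMap Z₁ Z₂ (b, w') := by
  have hcurve {v : ℝ} (hv : 0 < v) (hbv : |b| ≤ v) :
      bendMap Z₁ Z₂ (b, v) = (slopeCurve (Z₂ b) (Real.log v)).swap := by
    rw [bendMap_of_abs_le_snd h.system.reverse.dissipativeStrip_slopeRate h.fst h.snd hbv,
      slopeCurve, Real.exp_log hv, Prod.smul_mk, smul_eq_mul, smul_eq_mul, mul_one,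
      Prod.swap_prod_mk]
  rw [hcurve hw hb] at ht
  rw [hcurve hw' hb']
  have hrev := h.system.reverse.eq_slopeCurve_of_isIntegralCurve h.snd
    (isIntegralCurve_swap_comp_neg hγ) (t₀ := -t) (by rw [neg_neg, ht, Prod.swap_swap])
    (by rwa [Real.exp_log hw]) (x := Real.log w') (by rwa [Real.exp_log hw'])
  rw [← hrev, Prod.swap_swap, neg_add, neg_neg, ← sub_eq_add_neg]

theorem bendMap_orbitTime_right (h : OrbitFamilies lam mu ε R Z₁ Z₂)
    (hγ : IsIntegralCurve γ fun _ => saddleField lam mu R) (hu : 0 < p.1) (hu' : 0 < p'.1)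
    (hle : |p.2| ≤ p.1) (hle' : |p'.2| ≤ p'.1) (hb : p.2 = b) (hb' : p'.2 = b)
    (ht : γ t = bendMap Z₁ Z₂ p) :
    γ (t + (orbitTime lam mu R Z₁ Z₂ b p' - orbitTime lam mu R Z₁ Z₂ b p)) =
      bendMap Z₁ Z₂ p' := by
  obtain ⟨u, _⟩ := p
  obtain ⟨u', _⟩ := p'
  subst hb hb'
  rw [orbitTime, orbitTime, sub_sub_sub_cancel_right]
  exact h.bendMap_fst_of_isIntegralCurve hγ hu hu' hle hle' ht

theorem bendMap_orbitTime_left (h : OrbitFamilies lam mu ε R Z₁ Z₂)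
    (hγ : IsIntegralCurve γ fun _ => saddleField lam mu R) (hw : 0 < p.2) (hw' : 0 < p'.2)
    (hle : |p.1| ≤ p.2) (hle' : |p'.1| ≤ p'.2) (hb : p.1 = b) (hb' : p'.1 = b)
    (ht : γ t = bendMap Z₁ Z₂ p) :
    γ (t + (orbitTime lam mu R Z₁ Z₂ b p' - orbitTime lam mu R Z₁ Z₂ b p)) =
      bendMap Z₁ Z₂ p' := by
  obtain ⟨_, w⟩ := p
  obtain ⟨_, w'⟩ := p'
  subst hb hb'
  rw [orbitTime, orbitTime, sub_sub_sub_cancel_left, ← neg_sub, ← sub_eq_add_neg]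
  exact h.bendMap_snd_of_isIntegralCurve hγ hw hw' hle hle' ht

theorem bendMap_orbitTime (h : OrbitFamilies lam mu ε R Z₁ Z₂)
    (hγ : IsIntegralCurve γ fun _ => saddleField lam mu R) (hpp' : SameBranch p p')
    (ht : γ t = bendMap Z₁ Z₂ p) :
    γ (t + (orbitTime lam mu R Z₁ Z₂ (min p.1 p.2) p' -
        orbitTime lam mu R Z₁ Z₂ (min p.1 p.2) p)) = bendMap Z₁ Z₂ p' := by
  obtain ⟨hp, hp', hb⟩ := hpp'.mem, hpp'.mem', hpp'.min_eq.symm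
  rcases hpp'.side with hpos | ⟨hle, hle'⟩ | ⟨hle, hle'⟩
  · set b := min p.1 p.2
    have hbb : |b| ≤ b := (abs_of_pos hpos).le
    have hdiag : γ (t + (orbitTime lam mu R Z₁ Z₂ b (b, b) - orbitTime lam mu R Z₁ Z₂ b p)) =
        bendMap Z₁ Z₂ (b, b) := by
      rcases le_total p.2 p.1 with hle | hle
      · exact h.bendMap_orbitTime_right hγ (hp.fst_pos hle) hpos (hp.abs_snd_le hle) hbb
          (min_eq_right hle).symm rfl ht
      · exact h.bendMap_orbitTime_left hγ (hp.snd_pos hle) hpos (hp.abs_fst_le hle) hbb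
          (min_eq_left hle).symm rfl ht
    have hsplit : orbitTime lam mu R Z₁ Z₂ b p' - orbitTime lam mu R Z₁ Z₂ b p =
        (orbitTime lam mu R Z₁ Z₂ b (b, b) - orbitTime lam mu R Z₁ Z₂ b p) +
        (orbitTime lam mu R Z₁ Z₂ b p' - orbitTime lam mu R Z₁ Z₂ b (b, b)) := by ring
    rw [hsplit, ← add_assoc]
    rcases le_total p'.2 p'.1 with hle | hle
    · exact h.bendMap_orbitTime_right hγ hpos (hp'.fst_pos hle) hbb (hp'.abs_snd_le hle) rfl
        ((min_eq_right hle).symm.trans hb) hdiag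
    · exact h.bendMap_orbitTime_left hγ hpos (hp'.snd_pos hle) hbb (hp'.abs_fst_le hle) rfl
        ((min_eq_left hle).symm.trans hb) hdiag
  · exact h.bendMap_orbitTime_right hγ (hp.fst_pos hle) (hp'.fst_pos hle') (hp.abs_snd_le hle)
      (hp'.abs_snd_le hle') (min_eq_right hle).symm ((min_eq_right hle').symm.trans hb) ht
  · exact h.bendMap_orbitTime_left hγ (hp.snd_pos hle) (hp'.snd_pos hle') (hp.abs_fst_le hle)
      (hp'.abs_fst_le hle') (min_eq_left hle).symm ((min_eq_left hle').symm.trans hb) ht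

theorem orbitTime_lt (h : OrbitFamilies lam mu ε R Z₁ Z₂) (hpp' : SameBranch p p')
    (hlt : p.1 - p.2 < p'.1 - p'.2) (b : ℝ) :
    orbitTime lam mu R Z₁ Z₂ b p < orbitTime lam mu R Z₁ Z₂ b p' := by
  have hmono₁ := h.system.strictMono_transitTime (h.fst.solution b).continuous
  have hmono₂ := h.system.reverse.strictMono_transitTime (h.snd.solution b).continuous
  obtain ⟨hp, hp', hb⟩ := hpp'.mem, hpp'.mem', hpp'.min_eq
  rcases hpp'.side with hpos | ⟨hle, hle'⟩ | ⟨hle, hle'⟩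
  · have hu := (lt_min_iff.1 hpos).1
    have hw' := (lt_min_iff.1 (hb ▸ hpos)).2
    obtain ⟨hfst, hsnd⟩ := hpp'.le_of_sub_lt hlt
    rcases hfst.lt_or_eq with hlt₁ | heq
    · exact (sub_lt_sub_right (hmono₁ (Real.log_lt_log hu hlt₁)) _).trans_le
        (sub_le_sub_left (hmono₂.monotone (Real.log_le_log hw' hsnd)) _)
    · rw [orbitTime, orbitTime, heq]
      exact sub_lt_sub_left (hmono₂ (Real.log_lt_log hw' (by linarith))) _
  · rw [min_eq_right hle, min_eq_right hle'] at hb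
    rw [orbitTime, orbitTime, hb]
    exact sub_lt_sub_right (hmono₁ (Real.log_lt_log (hp.fst_pos hle) (by linarith))) _
  · rw [min_eq_left hle, min_eq_left hle'] at hb
    rw [orbitTime, orbitTime, hb]
    exact sub_lt_sub_left (hmono₂ (Real.log_lt_log (hp'.snd_pos hle') (by linarith))) _

end OrbitFamilies

/-! ### Straightening a saddle -/

/-- The curve `q` runs, for times in `I`, along a level set of `min u w` in the punctured half
plane, in the direction in which `u - w` increases. -/
structure LevelArc (q : ℝ → ℝ × ℝ) (I : Set ℝ) : Prop where
  continuousOn : ContinuousOn q I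
  mem : ∀ t ∈ I, InPuncturedHalfPlane (q t)
  min_eq : ∀ s ∈ I, ∀ t ∈ I, min (q s).1 (q s).2 = min (q t).1 (q t).2
  strictMonoOn : StrictMonoOn (fun t => (q t).1 - (q t).2) I

/-- The orbit arcs of the model flow on the half plane `0 ≤ u + w` into which saddles are
straightened: the equilibrium and the level arcs. -/
def ModelArc (q : ℝ → ℝ × ℝ) (I : Set ℝ) : Prop := EqOn q 0 I ∨ LevelArc q I

theorem continuousOn_log_of_ne_zero_or_const {f : ℝ → ℝ} {I : Set ℝ} (hf : ContinuousOn f I)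
    (h : (∀ t ∈ I, f t ≠ 0) ∨ ∀ s ∈ I, ∀ t ∈ I, f s = f t) :
    ContinuousOn (fun t => Real.log (f t)) I := by
  rcases h with hne | hconst
  · exact hf.log hne
  · exact fun t ht => continuousWithinAt_const.congr (fun s hs => by rw [hconst s hs t ht]) rfl

namespace LevelArc

variable {q : ℝ → ℝ × ℝ} {I : Set ℝ}

theorem side (h : LevelArc q I) (hI : I.OrdConnected) :
    (∀ t ∈ I, 0 < min (q t).1 (q t).2) ∨ (∀ t ∈ I, (q t).2 ≤ (q t).1) ∨
      ∀ t ∈ I, (q t).1 ≤ (q t).2 := by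
  by_contra! ⟨⟨r, hr, hmin⟩, ⟨s, hs, hlt⟩, ⟨t, ht, hgt⟩⟩
  obtain ⟨c, hc, hdiag⟩ := hI.isPreconnected.intermediate_value₂ hs ht
    h.continuousOn.fst h.continuousOn.snd hlt.le hgt.le
  rw [h.min_eq r hr c hc, hdiag, min_self] at hmin
  exact hmin.not_gt ((h.mem c hc).snd_pos hdiag.le)

theorem sameBranch (h : LevelArc q I) (hI : I.OrdConnected) {s t : ℝ} (hs : s ∈ I) (ht : t ∈ I) :
    SameBranch (q s) (q t) where
  mem := h.mem s hs
  mem' := h.mem t ht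
  min_eq := h.min_eq s hs t ht
  side := (h.side hI).imp (· s hs)
    (Or.imp (fun hle => ⟨hle s hs, hle t ht⟩) fun hle => ⟨hle s hs, hle t ht⟩)

theorem continuousOn_log_fst (h : LevelArc q I) (hI : I.OrdConnected) :
    ContinuousOn (fun t => Real.log (q t).1) I := by
  refine continuousOn_log_of_ne_zero_or_const h.continuousOn.fst ?_
  rcases h.side hI with hpos | hle | hle
  · exact Or.inl fun t ht => (lt_min_iff.1 (hpos t ht)).1.ne'
  · exact Or.inl fun t ht => ((h.mem t ht).fst_pos (hle t ht)).ne'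
  · exact Or.inr fun s hs t ht => by
      simpa only [min_eq_left (hle s hs), min_eq_left (hle t ht)] using h.min_eq s hs t ht

theorem continuousOn_log_snd (h : LevelArc q I) (hI : I.OrdConnected) :
    ContinuousOn (fun t => Real.log (q t).2) I := by
  refine continuousOn_log_of_ne_zero_or_const h.continuousOn.snd ?_
  rcases h.side hI with hpos | hle | hle
  · exact Or.inl fun t ht => (lt_min_iff.1 (hpos t ht)).2.ne'
  · exact Or.inr fun s hs t ht => by
      simpa only [min_eq_right (hle s hs), min_eq_right (hle t ht)] using h.min_eq s hs t ht
  · exact Or.inl fun t ht => ((h.mem t ht).snd_pos (hle t ht)).ne'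

end LevelArc

/-- The homeomorphism `Φ` takes the orbit arcs of `X` in the half plane `0 ≤ u + w` to the model
arcs, up to reparametrization. -/
structure IsStraightening (X : ℝ × ℝ → ℝ × ℝ) (Φ : (ℝ × ℝ) ≃ₜ (ℝ × ℝ)) : Prop where
  modelArc : ∀ (γ : ℝ → ℝ × ℝ) (I : Set ℝ), I.OrdConnected → IsIntegralCurveOn γ (fun _ => X) I →
    (∀ t ∈ I, 0 ≤ (Φ (γ t)).1 + (Φ (γ t)).2) → ModelArc (Φ ∘ γ) I
  exists_lift : ∀ (q : ℝ → ℝ × ℝ) (I : Set ℝ), I.OrdConnected → ModelArc q I →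
    ∃ (γ : ℝ → ℝ × ℝ) (τ : ℝ → ℝ), IsIntegralCurve γ (fun _ => X) ∧ StrictMonoOn τ I ∧
      ContinuousOn τ I ∧ ∀ t ∈ I, Φ (γ (τ t)) = q t

namespace OrbitFamilies

variable {lam mu : ℝ} {ε : ℝ≥0} {R : ℝ × ℝ → ℝ × ℝ} {Z₁ Z₂ : ℝ → ℝ → ℝ} {γ q : ℝ → ℝ × ℝ}
  {t₀ t₁ : ℝ} {p : ℝ × ℝ} {I : Set ℝ}

/-- The inverse of the bending map. -/
def straighten (h : OrbitFamilies lam mu ε R Z₁ Z₂) : (ℝ × ℝ) ≃ₜ (ℝ × ℝ) :=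
  ((isHomeomorph_bendMap h.system.dissipativeStrip_slopeRate
    h.system.reverse.dissipativeStrip_slopeRate h.fst h.snd).homeomorph _).symm

theorem straighten_eq_iff (h : OrbitFamilies lam mu ε R Z₁ Z₂) {p' : ℝ × ℝ} :
    h.straighten p = p' ↔ p = bendMap Z₁ Z₂ p' := Homeomorph.symm_apply_eq _

theorem straighten_of_sum_nonpos (h : OrbitFamilies lam mu ε R Z₁ Z₂) (hp : p.1 + p.2 ≤ 0) :
    h.straighten p = p := h.straighten_eq_iff.2 (bendMap_eq_self h.fst h.snd hp).symm

theorem straighten_sum_pos (h : OrbitFamilies lam mu ε R Z₁ Z₂) (hp : 0 < p.1 + p.2) :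
    0 < (h.straighten p).1 + (h.straighten p).2 := by
  by_contra! hneg
  have hself : p = h.straighten p :=
    (h.straighten_eq_iff.1 rfl).trans (bendMap_eq_self h.fst h.snd hneg)
  exact hp.not_ge (hself ▸ hneg)

theorem exists_isIntegralCurve (h : OrbitFamilies lam mu ε R Z₁ Z₂) (p : ℝ × ℝ) :
    ∃ γ, γ 0 = p ∧ IsIntegralCurve γ fun _ => saddleField lam mu R :=
  have ⟨_, hC⟩ := h.system.exists_lipschitzWith_saddleField
  exists_isIntegralCurve_of_lipschitz (fun _ => hC) (fun _ => continuous_const) 0 p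

theorem straighten_of_snd_le (h : OrbitFamilies lam mu ε R Z₁ Z₂)
    (hγ : IsIntegralCurve γ fun _ => saddleField lam mu R) (ht : t₀ < t₁)
    (hp : InPuncturedHalfPlane (h.straighten (γ t₀)))
    (hle : (h.straighten (γ t₀)).2 ≤ (h.straighten (γ t₀)).1) :
    (h.straighten (γ t₁)).2 = (h.straighten (γ t₀)).2 ∧
      (h.straighten (γ t₀)).1 < (h.straighten (γ t₁)).1 := by
  generalize hq : h.straighten (γ t₀) = q at hp hle ⊢
  obtain ⟨u, b⟩ := q
  have hγ₀ := h.straighten_eq_iff.1 hq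
  have hu : 0 < u := hp.fst_pos hle
  have hb : |b| ≤ u := hp.abs_snd_le hle
  obtain ⟨x, hx, hxt⟩ := h.system.exists_transitTime_eq (h.fst.solution b).continuous
    (lt_add_of_pos_right (transitTime lam R (Z₁ b) (Real.log u)) (sub_pos.2 ht))
  have hux : u < Real.exp x := (Real.log_lt_iff_lt_exp hu).1 hx
  have hγ₁ := h.bendMap_fst_of_isIntegralCurve hγ hu (Real.exp_pos x) hb (hb.trans hux.le) hγ₀
  rw [Real.log_exp, hxt, add_sub_cancel_left, add_sub_cancel] at hγ₁
  rw [h.straighten_eq_iff.2 hγ₁]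
  exact ⟨rfl, hux⟩

theorem straighten_of_fst_le (h : OrbitFamilies lam mu ε R Z₁ Z₂)
    (hγ : IsIntegralCurve γ fun _ => saddleField lam mu R) (ht : t₀ < t₁)
    (hp : InPuncturedHalfPlane (h.straighten (γ t₁)))
    (hle : (h.straighten (γ t₁)).1 ≤ (h.straighten (γ t₁)).2) :
    (h.straighten (γ t₀)).1 = (h.straighten (γ t₁)).1 ∧
      (h.straighten (γ t₁)).2 < (h.straighten (γ t₀)).2 := by
  generalize hq : h.straighten (γ t₁) = q at hp hle ⊢
  obtain ⟨b, w⟩ := q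
  have hγ₁ := h.straighten_eq_iff.1 hq
  have hw : 0 < w := hp.snd_pos hle
  have hb : |b| ≤ w := hp.abs_fst_le hle
  obtain ⟨x, hx, hxt⟩ := h.system.reverse.exists_transitTime_eq (h.snd.solution b).continuous
    (lt_add_of_pos_right (transitTime mu (reversePerturbation R) (Z₂ b) (Real.log w))
      (sub_pos.2 ht))
  have hwx : w < Real.exp x := (Real.log_lt_iff_lt_exp hw).1 hx
  have hγ₀ := h.bendMap_snd_of_isIntegralCurve hγ hw (Real.exp_pos x) hb (hb.trans hwx.le) hγ₁
  rw [Real.log_exp, hxt, add_sub_cancel_left, sub_sub_cancel] at hγ₀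
  rw [h.straighten_eq_iff.2 hγ₀]
  exact ⟨rfl, hwx⟩

theorem min_eq_and_sub_lt (h : OrbitFamilies lam mu ε R Z₁ Z₂)
    (hγ : IsIntegralCurve γ fun _ => saddleField lam mu R) (ht : t₀ < t₁)
    (hp : ∀ t ∈ Icc t₀ t₁, InPuncturedHalfPlane (h.straighten (γ t))) :
    min (h.straighten (γ t₀)).1 (h.straighten (γ t₀)).2 =
        min (h.straighten (γ t₁)).1 (h.straighten (γ t₁)).2 ∧
      (h.straighten (γ t₀)).1 - (h.straighten (γ t₀)).2 <
        (h.straighten (γ t₁)).1 - (h.straighten (γ t₁)).2 := by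
  have hcont : Continuous fun t => h.straighten (γ t) := h.straighten.continuous.comp hγ.continuous
  rcases le_or_gt (h.straighten (γ t₀)).2 (h.straighten (γ t₀)).1 with hle | hlt
  · have := h.straighten_of_snd_le hγ ht (hp t₀ (left_mem_Icc.2 ht.le)) hle
    grind
  rcases le_or_gt (h.straighten (γ t₁)).1 (h.straighten (γ t₁)).2 with hle | hgt
  · have := h.straighten_of_fst_le hγ ht (hp t₁ (right_mem_Icc.2 ht.le)) hle
    grind
  obtain ⟨c, ⟨h₀, h₁⟩, hdiag⟩ := isPreconnected_Icc.intermediate_value₂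
    (left_mem_Icc.2 ht.le) (right_mem_Icc.2 ht.le) hcont.fst.continuousOn hcont.snd.continuousOn
    hlt.le hgt.le
  have h₀' : t₀ < c := h₀.lt_of_ne (by rintro rfl; exact hlt.ne hdiag)
  have h₁' : c < t₁ := h₁.lt_of_ne (by rintro rfl; exact hgt.ne' hdiag)
  have hbefore := h.straighten_of_fst_le hγ h₀' (hp c ⟨h₀, h₁⟩) hdiag.le
  have hafter := h.straighten_of_snd_le hγ h₁' (hp c ⟨h₀, h₁⟩) hdiag.ge
  grind

theorem sign_straighten_sum (h : OrbitFamilies lam mu ε R Z₁ Z₂) (p : ℝ × ℝ) :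
    SignType.sign ((h.straighten p).1 + (h.straighten p).2) = SignType.sign (p.1 + p.2) := by
  rcases le_or_gt (p.1 + p.2) 0 with hp | hp
  · rw [h.straighten_of_sum_nonpos hp]
  · rw [sign_pos hp, sign_pos (h.straighten_sum_pos hp)]

theorem straighten_zero (h : OrbitFamilies lam mu ε R Z₁ Z₂) : h.straighten 0 = 0 :=
  h.straighten_of_sum_nonpos (by simp)

theorem isIntegralCurve_zero (h : OrbitFamilies lam mu ε R Z₁ Z₂) :
    IsIntegralCurve (0 : ℝ → ℝ × ℝ) fun _ => saddleField lam mu R := fun t => by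
  simp [h.system.saddleField_zero]

theorem modelArc_straighten (h : OrbitFamilies lam mu ε R Z₁ Z₂) (hI : I.OrdConnected)
    (hγ : IsIntegralCurveOn γ (fun _ => saddleField lam mu R) I)
    (hsum : ∀ t ∈ I, 0 ≤ (h.straighten (γ t)).1 + (h.straighten (γ t)).2) :
    ModelArc (h.straighten ∘ γ) I := by
  obtain ⟨C, hC⟩ := h.system.exists_lipschitzWith_saddleField
  by_cases hzero : ∃ a ∈ I, γ a = 0
  · obtain ⟨a, ha, ha₀⟩ := hzero
    have hγ₀ : EqOn γ 0 I := eqOn_of_isIntegralCurveOn (fun _ => hC) hI hγ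
      (h.isIntegralCurve_zero.isIntegralCurveOn I) ha ha₀
    exact Or.inl fun t ht => (congrArg h.straighten (hγ₀ ht)).trans h.straighten_zero
  push Not at hzero
  obtain ⟨δ, hδ, hγδ⟩ :=
    exists_isIntegralCurve_eqOn (fun _ => hC) (fun _ => continuous_const) hI hγ
  have hmem (t : ℝ) (ht : t ∈ I) : InPuncturedHalfPlane (h.straighten (δ t)) :=
    ⟨hγδ ht ▸ hsum t ht, fun h0 => hzero t ht
      ((hγδ ht).trans (h.straighten.injective (h0.trans h.straighten_zero.symm)))⟩
  have hpair {s t : ℝ} (hs : s ∈ I) (ht : t ∈ I) (hst : s < t) :=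
    h.min_eq_and_sub_lt hδ hst fun r hr => hmem r (hI.out hs ht hr)
  refine Or.inr ⟨h.straighten.continuous.comp_continuousOn hγ.continuousOn,
    fun t ht => by simpa only [Function.comp_apply, hγδ ht] using hmem t ht,
    fun s hs t ht => ?_, fun s hs t ht hst => ?_⟩
  · simp only [Function.comp_apply, hγδ hs, hγδ ht]
    rcases lt_trichotomy s t with hst | rfl | hts
    · exact (hpair hs ht hst).1
    · rfl
    · exact (hpair ht hs hts).1.symm
  · simpa only [Function.comp_apply, hγδ hs, hγδ ht] using (hpair hs ht hst).2

theorem continuousOn_orbitTime (h : OrbitFamilies lam mu ε R Z₁ Z₂) (hI : I.OrdConnected)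
    (hq : LevelArc q I) (b : ℝ) :
    ContinuousOn (fun t => orbitTime lam mu R Z₁ Z₂ b (q t)) I :=
  ((h.system.continuous_transitTime (h.fst.solution b).continuous).comp_continuousOn
    (hq.continuousOn_log_fst hI)).sub
  ((h.system.reverse.continuous_transitTime (h.snd.solution b).continuous).comp_continuousOn
    (hq.continuousOn_log_snd hI))

theorem exists_lift_of_levelArc (h : OrbitFamilies lam mu ε R Z₁ Z₂) (hI : I.OrdConnected)
    (hq : LevelArc q I) :
    ∃ (γ : ℝ → ℝ × ℝ) (τ : ℝ → ℝ), IsIntegralCurve γ (fun _ => saddleField lam mu R) ∧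
      StrictMonoOn τ I ∧ ContinuousOn τ I ∧ ∀ t ∈ I, h.straighten (γ (τ t)) = q t := by
  rcases I.eq_empty_or_nonempty with rfl | ⟨a, ha⟩
  · exact ⟨0, id, h.isIntegralCurve_zero, by simp [StrictMonoOn], continuousOn_id, by simp⟩
  obtain ⟨γ, hγa, hγ⟩ := h.exists_isIntegralCurve (bendMap Z₁ Z₂ (q a))
  set b := min (q a).1 (q a).2
  refine ⟨γ, fun t => orbitTime lam mu R Z₁ Z₂ b (q t) - orbitTime lam mu R Z₁ Z₂ b (q a), hγ,
    fun s hs t ht hst => sub_lt_sub_right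
      (h.orbitTime_lt (hq.sameBranch hI hs ht) (hq.strictMonoOn hs ht hst) b) _,
    (h.continuousOn_orbitTime hI hq b).sub continuousOn_const, fun t ht => ?_⟩
  rw [h.straighten_eq_iff, ← h.bendMap_orbitTime hγ (hq.sameBranch hI ha ht) hγa, zero_add]

theorem isStraightening_straighten (h : OrbitFamilies lam mu ε R Z₁ Z₂) :
    IsStraightening (saddleField lam mu R) h.straighten where
  modelArc _ _ hI hγ hsum := h.modelArc_straighten hI hγ hsum
  exists_lift _ _ hI hq := hq.elim
    (fun hzero => ⟨0, id, h.isIntegralCurve_zero, strictMono_id.strictMonoOn _, continuousOn_id,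
      fun _ ht => h.straighten_zero.trans (hzero ht).symm⟩)
    (h.exists_lift_of_levelArc hI)

end OrbitFamilies

/-! ### Normal form at a saddle -/

theorem exists_lipschitzWith_eqOn_of_lipschitzOnWith_prod {α : Type*} [PseudoMetricSpace α]
    {f : α → ℝ × ℝ} {K : ℝ≥0} {s : Set α} (hf : LipschitzOnWith K f s) :
    ∃ g, LipschitzWith K g ∧ EqOn f g s := by
  obtain ⟨g₁, hg₁, heq₁⟩ := LipschitzOnWith.extend_real (f := Prod.fst ∘ f)
    (by simpa only [one_mul] using LipschitzWith.prod_fst.comp_lipschitzOnWith hf)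
  obtain ⟨g₂, hg₂, heq₂⟩ := LipschitzOnWith.extend_real (f := Prod.snd ∘ f)
    (by simpa only [one_mul] using LipschitzWith.prod_snd.comp_lipschitzOnWith hf)
  exact ⟨fun p => (g₁ p, g₂ p), by simpa only [max_self] using hg₁.prodMk hg₂,
    fun p hp => Prod.ext (heq₁ hp) (heq₂ hp)⟩

theorem exists_lipschitzWith_eventuallyEq_add {E : Type*} [NormedAddCommGroup E] [NormedSpace ℝ E]
    {F : E → ℝ × ℝ} {A : E →L[ℝ] ℝ × ℝ} {x : E} (hF : HasStrictFDerivAt F A x) {ε : ℝ≥0}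
    (hε : 0 < ε) : ∃ R, LipschitzWith ε R ∧ F =ᶠ[𝓝 x] fun p => A p + R p := by
  have hrest : HasStrictFDerivAt (F - ⇑A) (0 : E →L[ℝ] ℝ × ℝ) x :=
    sub_self A ▸ hF.sub A.hasStrictFDerivAt
  obtain ⟨s, hs, hlip⟩ := hrest.exists_lipschitzOnWith_of_nnnorm_lt ε (by simpa using hε)
  obtain ⟨R, hR, heq⟩ := exists_lipschitzWith_eqOn_of_lipschitzOnWith_prod hlip
  exact ⟨R, hR, eventually_of_mem hs fun p hp => sub_eq_iff_eq_add'.1 (heq hp)⟩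

section NormalForm

variable {lam mu : ℝ}

theorem exists_small_lipschitz_constant (hlam : 0 < lam) (hmu : 0 < mu) :
    ∃ ε : ℝ≥0, 0 < ε ∧ (ε : ℝ) < lam ∧ (ε : ℝ) < mu ∧ (mu + ε) * ε ≤ (lam - ε) ^ 2 / 2 ∧
      (lam + ε) * ε ≤ (mu - ε) ^ 2 / 2 := by
  have hsmall {f g : ℝ≥0 → ℝ} (hf : Continuous f) (hg : Continuous g) (h : f 0 < g 0) :
      ∀ᶠ ε in 𝓝[>] 0, f ε < g ε :=
    nhdsWithin_le_nhds (hf.continuousAt.eventually_lt hg.continuousAt h)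
  have hquad {c d : ℝ} (hd : 0 < d) : ∀ᶠ ε : ℝ≥0 in 𝓝[>] 0, (c + ε) * ε < (d - ε) ^ 2 / 2 :=
    hsmall (by fun_prop) (by fun_prop) (by simpa using pow_pos hd 2)
  obtain ⟨ε, hε, hlt₁, hlt₂, hq₁, hq₂⟩ := ((eventually_mem_nhdsWithin (a := (0 : ℝ≥0))).and
    ((hsmall NNReal.continuous_coe continuous_const hlam).and
    ((hsmall NNReal.continuous_coe continuous_const hmu).and
    ((hquad (c := mu) hlam).and (hquad (c := lam) hmu))))).exists
  exact ⟨ε, hε, hlt₁, hlt₂, hq₁.le, hq₂.le⟩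

theorem exists_saddleSystem_eventuallyEq (hlam : 0 < lam) (hmu : 0 < mu) {F : ℝ × ℝ → ℝ × ℝ}
    {D : ℝ × ℝ →L[ℝ] ℝ × ℝ} (hF : HasStrictFDerivAt F D 0) (hF₀ : F 0 = 0)
    (hD : ∀ p, D p = (lam * p.1, -mu * p.2)) :
    ∃ ε R, SaddleSystem lam mu ε R ∧ F =ᶠ[𝓝 0] saddleField lam mu R := by
  obtain ⟨ε, hε, hlt₁, hlt₂, hq₁, hq₂⟩ := exists_small_lipschitz_constant hlam hmu
  obtain ⟨R, hR, heq⟩ := exists_lipschitzWith_eventuallyEq_add hF hε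
  have hR₀ : R 0 = 0 := by simpa [hF₀] using heq.eq_of_nhds.symm
  exact ⟨ε, R, ⟨hR, hR₀, hlt₁, hlt₂, hq₁, hq₂⟩, heq.trans (.of_forall fun p => by
    simp only [saddleField, hD])⟩

theorem exists_saddle_eigenvalues (t : ℝ) {d : ℝ} (hd : d < 0) :
    ∃ lam mu : ℝ, 0 < lam ∧ 0 < mu ∧ lam - mu = t ∧ lam * mu = -d := by
  have hdisc : t ^ 2 < t ^ 2 - 4 * d := by linarith
  have hroot := abs_lt.1 (Real.lt_sqrt_of_sq_lt (by rwa [sq_abs]) : |t| < √(t ^ 2 - 4 * d))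
  refine ⟨(√(t ^ 2 - 4 * d) + t) / 2, (√(t ^ 2 - 4 * d) - t) / 2, by linarith, by linarith, by ring,
    ?_⟩
  linarith [Real.sq_sqrt ((sq_nonneg t).trans hdisc.le)]

theorem exists_eigencoordinates {A : ℝ × ℝ →L[ℝ] ℝ × ℝ} {ρ : ℝ}
    (htrace : lam - mu = (A (1, 0)).1 + (A (0, 1)).2)
    (hdet : lam * mu = -((A (1, 0)).1 * (A (0, 1)).2 - (A (0, 1)).1 * (A (1, 0)).2))
    (hsum : lam + mu ≠ 0) (hc : (A (1, 0)).2 ≠ 0) (hρ : ρ ≠ 0) :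
    ∃ M : (ℝ × ℝ) ≃L[ℝ] (ℝ × ℝ), (∀ p, M (A p) = (lam * (M p).1, -mu * (M p).2)) ∧
      (∀ p, (M p).1 + (M p).2 = (lam + mu) * (ρ / (A (1, 0)).2 * p.2)) ∧
      ∀ x, M (x, 0) = (ρ * x, -(ρ * x)) := by
  have hA (x y : ℝ) : A (x, y) = (x * (A (1, 0)).1 + y * (A (0, 1)).1,
      x * (A (1, 0)).2 + y * (A (0, 1)).2) := by
    rw [show (x, y) = x • ((1 : ℝ), (0 : ℝ)) + y • ((0 : ℝ), (1 : ℝ)) by simp, map_add, map_smul,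
      map_smul]
    rfl
  generalize (A (1, 0)).1 = a, (A (0, 1)).1 = b, (A (1, 0)).2 = c, (A (0, 1)).2 = d at *
  let M : (ℝ × ℝ) ≃ₗ[ℝ] (ℝ × ℝ) :=
    { toFun p := (ρ * p.1 + ρ * (mu + d) / c * p.2, -(ρ * p.1) + ρ * (lam - d) / c * p.2)
      map_add' p q := by ext <;> simp <;> ring
      map_smul' r p := by ext <;> simp <;> ring
      invFun q := (((lam - d) * q.1 - (mu + d) * q.2) / (ρ * (lam + mu)),
        c * (q.1 + q.2) / (ρ * (lam + mu)))
      left_inv p := by ext <;> field_simp <;> ring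
      right_inv q := by ext <;> field_simp <;> ring }
  have hM (x y : ℝ) : M.toContinuousLinearEquiv (x, y) =
      (ρ * x + ρ * (mu + d) / c * y, -(ρ * x) + ρ * (lam - d) / c * y) := rfl
  refine ⟨M.toContinuousLinearEquiv, fun ⟨x, y⟩ => ?_, fun ⟨x, y⟩ => ?_, fun x => ?_⟩
  · obtain rfl : a = lam - mu - d := by linarith
    rw [hA, hM, hM]
    refine Prod.ext ?_ ?_ <;> field_simp
    · linear_combination -y * hdet
    · linear_combination y * hdet
  · rw [hM]
    ring
  · simp [hM]

end NormalForm

theorem SaddleSystem.exists_isStraightening {lam mu : ℝ} {ε : ℝ≥0} {R : ℝ × ℝ → ℝ × ℝ}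
    (h : SaddleSystem lam mu ε R) : ∃ Φ, IsStraightening (saddleField lam mu R) Φ ∧
      (∀ p, SignType.sign ((Φ p).1 + (Φ p).2) = SignType.sign (p.1 + p.2)) ∧
      ∀ p, p.1 + p.2 ≤ 0 → Φ p = p := by
  obtain ⟨Z₁, hZ₁⟩ := h.dissipativeStrip_slopeRate.exists_entryFamily
  obtain ⟨Z₂, hZ₂⟩ := h.reverse.dissipativeStrip_slopeRate.exists_entryFamily
  have hfam : OrbitFamilies lam mu ε R Z₁ Z₂ := ⟨h, hZ₁, hZ₂⟩
  exact ⟨hfam.straighten, hfam.isStraightening_straighten, hfam.sign_straighten_sum,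
    fun p hp => hfam.straighten_of_sum_nonpos hp⟩

theorem IsStraightening.conj {F : ℝ × ℝ → ℝ × ℝ} {Φ : (ℝ × ℝ) ≃ₜ (ℝ × ℝ)}
    (h : IsStraightening F Φ) (M : (ℝ × ℝ) ≃L[ℝ] (ℝ × ℝ)) :
    IsStraightening (fun p => M.symm (F (M p))) (M.toHomeomorph.trans Φ) where
  modelArc γ I hI hγ hsum := h.modelArc (M ∘ γ) I hI
    (fun t ht => by simpa using M.hasFDerivAt.comp_hasDerivWithinAt t (hγ t ht)) hsum
  exists_lift q I hI hq := by
    obtain ⟨γ, τ, hγ, hmono, hcont, hΦ⟩ := h.exists_lift q I hI hq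
    exact ⟨M.symm ∘ γ, τ, fun t => by simpa using M.symm.hasFDerivAt.comp_hasDerivAt t (hγ t),
      hmono, hcont, fun t ht => by simpa using hΦ t ht⟩

/-- The origin is an equilibrium of `X` of saddle type, with linearization `A`. -/
structure IsSaddle (X : ℝ × ℝ → ℝ × ℝ) (A : ℝ × ℝ →L[ℝ] ℝ × ℝ) : Prop where
  hasStrictFDerivAt : HasStrictFDerivAt X A 0
  map_zero : X 0 = 0
  det_neg : (A (1, 0)).1 * (A (0, 1)).2 - (A (0, 1)).1 * (A (1, 0)).2 < 0

theorem IsSaddle.exists_saddleSystem {X : ℝ × ℝ → ℝ × ℝ} {A : ℝ × ℝ →L[ℝ] ℝ × ℝ}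
    (h : IsSaddle X A) (hc : (A (1, 0)).2 ≠ 0) {ρ : ℝ} (hρ : ρ ≠ 0) :
    ∃ (lam mu : ℝ) (ε : ℝ≥0) (R : ℝ × ℝ → ℝ × ℝ) (M : (ℝ × ℝ) ≃L[ℝ] (ℝ × ℝ)),
      SaddleSystem lam mu ε R ∧ X =ᶠ[𝓝 0] (fun p => M.symm (saddleField lam mu R (M p))) ∧
      (∀ p, (M p).1 + (M p).2 = (lam + mu) * (ρ / (A (1, 0)).2 * p.2)) ∧
      ∀ x, M (x, 0) = (ρ * x, -(ρ * x)) := by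
  obtain ⟨lam, mu, hlam, hmu, htrace, hdet⟩ := exists_saddle_eigenvalues _ h.det_neg
  obtain ⟨M, hMA, hMsum, hMline⟩ :=
    exists_eigencoordinates htrace hdet (add_pos hlam hmu).ne' hc hρ
  have hderiv : HasStrictFDerivAt (fun p => M (X (M.symm p)))
      ((M : ℝ × ℝ →L[ℝ] ℝ × ℝ) ∘L A ∘L (M.symm : ℝ × ℝ →L[ℝ] ℝ × ℝ)) 0 :=
    M.hasStrictFDerivAt.comp 0 (HasStrictFDerivAt.comp 0
      (M.symm.map_zero.symm ▸ h.hasStrictFDerivAt) M.symm.hasStrictFDerivAt)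
  obtain ⟨ε, R, hsys, heq⟩ := exists_saddleSystem_eventuallyEq hlam hmu hderiv
    (by simp [h.map_zero]) (fun p => by simp [hMA])
  have hM₀ : Tendsto M (𝓝 0) (𝓝 0) := by simpa only [M.map_zero] using M.continuous.tendsto 0
  refine ⟨lam, mu, ε, R, M, hsys, ?_, hMsum, hMline⟩
  filter_upwards [hM₀.eventually heq] with p hp
  rw [← hp, M.symm_apply_apply, M.symm_apply_apply]

/-- `Φ` straightens the orbit arcs of `X` in the half plane `0 ≤ σ * y` to model arcs, and maps the
switching line to the antidiagonal with scaling factor `ρ`. -/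
structure StraightensSide (X : ℝ × ℝ → ℝ × ℝ) (Φ : (ℝ × ℝ) ≃ₜ (ℝ × ℝ)) (σ ρ : ℝ) : Prop where
  isStraightening : IsStraightening X Φ
  sign_sum : ∀ p, SignType.sign ((Φ p).1 + (Φ p).2) = SignType.sign (σ * p.2)
  map_line : ∀ x, Φ (x, 0) = (ρ * x, -(ρ * x))

theorem IsSaddle.exists_straightensSide {X : ℝ × ℝ → ℝ × ℝ} {A : ℝ × ℝ →L[ℝ] ℝ × ℝ}
    (h : IsSaddle X A) {σ ρ : ℝ} (hρ : 0 < σ * ρ * (A (1, 0)).2) :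
    ∃ X' Φ, X =ᶠ[𝓝 0] X' ∧ StraightensSide X' Φ σ ρ := by
  have hc : (A (1, 0)).2 ≠ 0 := right_ne_zero_of_mul hρ.ne'
  have hσ : σ ≠ 0 := left_ne_zero_of_mul (left_ne_zero_of_mul hρ.ne')
  obtain ⟨lam, mu, ε, R, M, hsys, heq, hMsum, hMline⟩ :=
    h.exists_saddleSystem hc (right_ne_zero_of_mul (left_ne_zero_of_mul hρ.ne'))
  obtain ⟨Φ, hΦ, hsign, hself⟩ := hsys.exists_isStraightening
  have hlam : 0 < lam := hsys.reverse.mu_pos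
  have hmu : 0 < mu := hsys.mu_pos
  have hfactor : 0 < (lam + mu) * (σ * ρ * (A (1, 0)).2) / (σ * (A (1, 0)).2) ^ 2 := by
    positivity
  have hsum (p : ℝ × ℝ) : (M p).1 + (M p).2 =
      (lam + mu) * (σ * ρ * (A (1, 0)).2) / (σ * (A (1, 0)).2) ^ 2 * (σ * p.2) := by
    rw [hMsum]
    field_simp
  refine ⟨_, _, heq, hΦ.conj M, fun p => (hsign (M p)).trans ?_, fun x => ?_⟩
  · rw [hsum, sign_mul, sign_pos hfactor, one_mul]
  · exact (hself _ (by simp [hMline])).trans (hMline x)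

/-! ### Gluing along the switching line -/

theorem IsStraightening.mapsOrbits {X X' F F' : ℝ × ℝ → ℝ × ℝ} {Φ Φ' : (ℝ × ℝ) ≃ₜ (ℝ × ℝ)}
    (h : IsStraightening F Φ) (h' : IsStraightening F' Φ') {H : ℝ × ℝ → ℝ × ℝ} {S S' : Set (ℝ × ℝ)}
    (hX : EqOn X F S) (hX' : EqOn X' F' S') (hS : ∀ p ∈ S, 0 ≤ (Φ p).1 + (Φ p).2)
    (hH : ∀ p ∈ S, Φ' (H p) = Φ p) (hmaps : MapsTo H S S') : MapsOrbits X X' H S S' := by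
  intro γ I hI hγ hγS
  have hmodel : ModelArc (Φ ∘ γ) I := h.modelArc γ I hI
    (fun t ht => (hγ t ht).hasDerivWithinAt.congr_deriv (hX (hγS t ht))) fun t ht => hS _ (hγS t ht)
  obtain ⟨δ, τ, hδ, hmono, hcont, hΦ⟩ := h'.exists_lift (Φ ∘ γ) I hI hmodel
  have hHγ (t : ℝ) (ht : t ∈ I) : H (γ t) = δ (τ t) :=
    Φ'.injective ((hH _ (hγS t ht)).trans (hΦ t ht).symm)
  have hδS : ∀ s ∈ τ '' I, δ s ∈ S' := by
    rintro _ ⟨t, ht, rfl⟩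
    exact hHγ t ht ▸ hmaps (hγS t ht)
  exact ⟨δ, τ '' I, τ, (hI.isPreconnected.image τ hcont).ordConnected,
    fun s hs => (hδ s).congr_deriv (hX' (hδS s hs)).symm, hδS, hmono.injOn.bijOn_image, hmono,
    hcont, hHγ⟩

/-- The homeomorphism `G` maps the switching line and both of its sides to themselves. -/
def PreservesSides (G : (ℝ × ℝ) ≃ₜ (ℝ × ℝ)) : Prop :=
  ∀ p, SignType.sign (G p).2 = SignType.sign p.2

namespace PreservesSides

variable {G G₁ G₂ : (ℝ × ℝ) ≃ₜ (ℝ × ℝ)}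

theorem symm (h : PreservesSides G) : PreservesSides G.symm := fun p => by
  rw [← h, G.apply_symm_apply]

theorem snd_nonneg_iff (h : PreservesSides G) {p : ℝ × ℝ} : 0 ≤ (G p).2 ↔ 0 ≤ p.2 := by
  rw [← sign_nonneg_iff, h, sign_nonneg_iff]

theorem snd_nonpos_iff (h : PreservesSides G) {p : ℝ × ℝ} : (G p).2 ≤ 0 ↔ p.2 ≤ 0 := by
  rw [← sign_nonpos_iff, h, sign_nonpos_iff]

theorem snd_eq_zero_iff (h : PreservesSides G) {p : ℝ × ℝ} : (G p).2 = 0 ↔ p.2 = 0 := by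
  rw [← sign_eq_zero_iff, h, sign_eq_zero_iff]

theorem eqOn_symm (h₂ : PreservesSides G₂) (heq : EqOn G₁ G₂ {p | p.2 = 0}) :
    EqOn G₁.symm G₂.symm {p | p.2 = 0} := fun p hp => by
  rw [G₁.symm_apply_eq, heq (h₂.symm.snd_eq_zero_iff.2 hp), G₂.apply_symm_apply]

theorem image_inter_line {U V : Set (ℝ × ℝ)} (h : PreservesSides G) (hmaps : MapsTo G U V)
    (hmaps' : MapsTo G.symm V U) : G '' (U ∩ {p | p.2 = 0}) = V ∩ {p | p.2 = 0} := by
  refine Subset.antisymm ?_ fun q hq => ?_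
  · rintro _ ⟨p, hp, rfl⟩
    exact ⟨hmaps hp.1, h.snd_eq_zero_iff.2 hp.2⟩
  · exact ⟨G.symm q, ⟨hmaps' hq.1, h.symm.snd_eq_zero_iff.2 hq.2⟩, G.apply_symm_apply q⟩

end PreservesSides

/-- The map that equals `G₁` on the upper and `G₂` on the lower half plane. -/
def glueHalfPlanes (G₁ G₂ : ℝ × ℝ → ℝ × ℝ) (p : ℝ × ℝ) : ℝ × ℝ := if 0 ≤ p.2 then G₁ p else G₂ p

section Glue

variable {G₁ G₂ : (ℝ × ℝ) ≃ₜ (ℝ × ℝ)}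

theorem continuous_glueHalfPlanes (heq : EqOn G₁ G₂ {p | p.2 = 0}) :
    Continuous (glueHalfPlanes G₁ G₂) :=
  Continuous.if_le G₁.continuous G₂.continuous continuous_const continuous_snd
    fun _ hp => heq hp.symm

theorem glueHalfPlanes_symm_glueHalfPlanes (h₁ : PreservesSides G₁) (h₂ : PreservesSides G₂)
    (p : ℝ × ℝ) : glueHalfPlanes G₁.symm G₂.symm (glueHalfPlanes G₁ G₂ p) = p := by
  by_cases hp : 0 ≤ p.2
  · rw [glueHalfPlanes, glueHalfPlanes, if_pos hp, if_pos (h₁.snd_nonneg_iff.2 hp),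
      G₁.symm_apply_apply]
  · rw [glueHalfPlanes, glueHalfPlanes, if_neg hp, if_neg (h₂.snd_nonneg_iff.not.2 hp),
      G₂.symm_apply_apply]

theorem exists_homeomorph_eqOn_halfPlanes (h₁ : PreservesSides G₁) (h₂ : PreservesSides G₂)
    (heq : EqOn G₁ G₂ {p | p.2 = 0}) : ∃ H : (ℝ × ℝ) ≃ₜ (ℝ × ℝ), PreservesSides H ∧
      (∀ p, 0 ≤ p.2 → H p = G₁ p) ∧ ∀ p, p.2 ≤ 0 → H p = G₂ p := by
  have hupper (p : ℝ × ℝ) (hp : 0 ≤ p.2) : glueHalfPlanes G₁ G₂ p = G₁ p := if_pos hp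
  have hlower (p : ℝ × ℝ) (hp : p.2 ≤ 0) : glueHalfPlanes G₁ G₂ p = G₂ p := by
    rcases hp.lt_or_eq with hlt | hline
    · exact if_neg hlt.not_ge
    · exact (hupper p hline.ge).trans (heq hline)
  refine ⟨⟨⟨glueHalfPlanes G₁ G₂, glueHalfPlanes G₁.symm G₂.symm,
    glueHalfPlanes_symm_glueHalfPlanes h₁ h₂, glueHalfPlanes_symm_glueHalfPlanes h₁.symm h₂.symm⟩,
    continuous_glueHalfPlanes heq, continuous_glueHalfPlanes (h₂.eqOn_symm heq)⟩,
    fun p => ?_, hupper, hlower⟩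
  rcases le_total 0 p.2 with hp | hp
  · exact (congrArg (SignType.sign ·.2) (hupper p hp)).trans (h₁ p)
  · exact (congrArg (SignType.sign ·.2) (hlower p hp)).trans (h₂ p)

end Glue

namespace StraightensSide

variable {F F' : ℝ × ℝ → ℝ × ℝ} {Φ Φ' : (ℝ × ℝ) ≃ₜ (ℝ × ℝ)} {σ ρ ρ' : ℝ}

theorem sum_nonneg_iff (h : StraightensSide F Φ σ ρ) {p : ℝ × ℝ} :
    0 ≤ (Φ p).1 + (Φ p).2 ↔ 0 ≤ σ * p.2 := by
  rw [← sign_nonneg_iff, h.sign_sum, sign_nonneg_iff]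

theorem preservesSides (h : StraightensSide F Φ σ ρ) (h' : StraightensSide F' Φ' σ ρ')
    (hσ : σ ≠ 0) : PreservesSides (Φ.trans Φ'.symm) := fun p => by
  have heq := h'.sign_sum (Φ'.symm (Φ p))
  rw [Φ'.apply_symm_apply, h.sign_sum, sign_mul, sign_mul] at heq
  exact (mul_left_cancel₀ (sign_ne_zero.2 hσ) heq).symm

theorem symm_apply_line (h : StraightensSide F Φ σ ρ) (h' : StraightensSide F' Φ' σ ρ')
    (hρ' : ρ' ≠ 0) (x : ℝ) : Φ'.symm (Φ (x, 0)) = (ρ / ρ' * x, 0) := by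
  rw [Φ'.symm_apply_eq, h.map_line, h'.map_line, ← mul_assoc, mul_div_cancel₀ _ hρ']

end StraightensSide

/-- The homeomorphisms `Φ` and `Ψ` straighten the orbit arcs in the upper and the lower half plane,
respectively, of vector fields that agree with `X` and `Y` on `N`; the scaling factors on the
switching line are opposite because the time directions there are. -/
structure StraightensBothSides (X Y : ℝ × ℝ → ℝ × ℝ) (N : Set (ℝ × ℝ)) (Φ Ψ : (ℝ × ℝ) ≃ₜ (ℝ × ℝ))
    (ρ : ℝ) : Prop where
  upper : ∃ F, EqOn X F N ∧ StraightensSide F Φ 1 ρ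
  lower : ∃ F, EqOn Y F N ∧ StraightensSide F Ψ (-1) (-ρ)

namespace StraightensBothSides

variable {X Y X' Y' : ℝ × ℝ → ℝ × ℝ} {N N' S S' : Set (ℝ × ℝ)} {Φ Ψ Φ' Ψ' : (ℝ × ℝ) ≃ₜ (ℝ × ℝ)}
  {ρ ρ' : ℝ} {H : ℝ × ℝ → ℝ × ℝ}

theorem mapsOrbits_upper (h : StraightensBothSides X Y N Φ Ψ ρ)
    (h' : StraightensBothSides X' Y' N' Φ' Ψ' ρ') (hS : S ⊆ N ∩ {p | 0 ≤ p.2}) (hS' : S' ⊆ N')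
    (hH : ∀ p, 0 ≤ p.2 → Φ' (H p) = Φ p) (hmaps : MapsTo H S S') : MapsOrbits X X' H S S' := by
  obtain ⟨F, hX, hF⟩ := h.upper
  obtain ⟨F', hX', hF'⟩ := h'.upper
  exact hF.isStraightening.mapsOrbits hF'.isStraightening (hX.mono fun p hp => (hS hp).1)
    (hX'.mono hS') (fun p hp => hF.sum_nonneg_iff.2 (by simpa using (hS hp).2))
    (fun p hp => hH p (hS hp).2) hmaps

theorem mapsOrbits_lower (h : StraightensBothSides X Y N Φ Ψ ρ)
    (h' : StraightensBothSides X' Y' N' Φ' Ψ' ρ') (hS : S ⊆ N ∩ {p | p.2 ≤ 0}) (hS' : S' ⊆ N')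
    (hH : ∀ p, p.2 ≤ 0 → Ψ' (H p) = Ψ p) (hmaps : MapsTo H S S') : MapsOrbits Y Y' H S S' := by
  obtain ⟨F, hY, hF⟩ := h.lower
  obtain ⟨F', hY', hF'⟩ := h'.lower
  exact hF.isStraightening.mapsOrbits hF'.isStraightening (hY.mono fun p hp => (hS hp).1)
    (hY'.mono hS') (fun p hp => hF.sum_nonneg_iff.2 (by simpa using (hS hp).2))
    (fun p hp => hH p (hS hp).2) hmaps

theorem exists_homeomorph (h : StraightensBothSides X Y N Φ Ψ ρ)
    (h' : StraightensBothSides X' Y' N' Φ' Ψ' ρ') (hρ' : ρ' ≠ 0) :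
    ∃ H : (ℝ × ℝ) ≃ₜ (ℝ × ℝ), PreservesSides H ∧ H 0 = 0 ∧ (∀ p, 0 ≤ p.2 → Φ' (H p) = Φ p) ∧
      ∀ p, p.2 ≤ 0 → Ψ' (H p) = Ψ p := by
  obtain ⟨F, -, hF⟩ := h.upper
  obtain ⟨F', -, hF'⟩ := h'.upper
  obtain ⟨E, -, hE⟩ := h.lower
  obtain ⟨E', -, hE'⟩ := h'.lower
  have hline : EqOn (Φ.trans Φ'.symm) (Ψ.trans Ψ'.symm) {p | p.2 = 0} := by
    rintro ⟨x, _⟩ rfl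
    exact (hF.symm_apply_line hF' hρ' x).trans
      (by rw [← neg_div_neg_eq, ← hE.symm_apply_line hE' (neg_ne_zero.2 hρ')]; rfl)
  obtain ⟨H, hsides, hupper, hlower⟩ := exists_homeomorph_eqOn_halfPlanes
    (hF.preservesSides hF' one_ne_zero) (hE.preservesSides hE' (by norm_num)) hline
  refine ⟨H, hsides, (hupper 0 le_rfl).trans ?_, fun p hp => ?_, fun p hp => ?_⟩
  · exact (hF.symm_apply_line hF' hρ' 0).trans (by simp)
  · exact Φ'.symm_apply_eq.1 (hupper p hp).symm |>.symm
  · exact Ψ'.symm_apply_eq.1 (hlower p hp).symm |>.symm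

theorem localSigmaEquiv (h : StraightensBothSides X Y N Φ Ψ ρ)
    (h' : StraightensBothSides X' Y' N' Φ' Ψ' ρ') (hρ' : ρ' ≠ 0) (hN : N ∈ 𝓝 0) (hN' : N' ∈ 𝓝 0) :
    LocalSigmaEquiv X Y X' Y' := by
  obtain ⟨H, hsides, hH₀, hupper, hlower⟩ := h.exists_homeomorph h' hρ'
  have hH₀' : H.symm 0 = 0 := H.symm_apply_eq.2 hH₀.symm
  have hupper' (p : ℝ × ℝ) (hp : 0 ≤ p.2) : Φ (H.symm p) = Φ' p := by
    rw [← hupper _ (hsides.symm.snd_nonneg_iff.2 hp), H.apply_symm_apply]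
  have hlower' (p : ℝ × ℝ) (hp : p.2 ≤ 0) : Ψ (H.symm p) = Ψ' p := by
    rw [← hlower _ (hsides.symm.snd_nonpos_iff.2 hp), H.apply_symm_apply]
  have hmaps : MapsTo H (N ∩ H ⁻¹' N') (N' ∩ H.symm ⁻¹' N) := fun p hp =>
    ⟨hp.2, by simpa using hp.1⟩
  have hmaps' : MapsTo H.symm (N' ∩ H.symm ⁻¹' N) (N ∩ H ⁻¹' N') := fun p hp =>
    ⟨hp.2, by simpa using hp.1⟩
  refine ⟨N ∩ H ⁻¹' N', N' ∩ H.symm ⁻¹' N, H, H.symm,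
    inter_mem hN (H.continuous.tendsto' 0 0 hH₀ hN'),
    inter_mem hN' (H.symm.continuous.tendsto' 0 0 hH₀' hN), H.continuous.continuousOn,
    H.symm.continuous.continuousOn, ?_, fun p _ => H.symm_apply_apply p,
    fun p _ => H.apply_symm_apply p, hH₀, ?_, ?_, ?_, ?_, ?_⟩
  · exact ⟨hmaps, H.injective.injOn, fun p hp => ⟨H.symm p, hmaps' hp, H.apply_symm_apply p⟩⟩
  · exact hsides.image_inter_line hmaps hmaps'
  · exact h.mapsOrbits_upper h' (inter_subset_inter_left _ inter_subset_left)
      (inter_subset_left.trans inter_subset_left) hupper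
      fun p hp => ⟨hmaps hp.1, hsides.snd_nonneg_iff.2 hp.2⟩
  · exact h.mapsOrbits_lower h' (inter_subset_inter_left _ inter_subset_left)
      (inter_subset_left.trans inter_subset_left) hlower
      fun p hp => ⟨hmaps hp.1, hsides.snd_nonpos_iff.2 hp.2⟩
  · exact h'.mapsOrbits_upper h (inter_subset_inter_left _ inter_subset_left)
      (inter_subset_left.trans inter_subset_left) hupper'
      fun p hp => ⟨hmaps' hp.1, hsides.symm.snd_nonneg_iff.2 hp.2⟩
  · exact h'.mapsOrbits_lower h (inter_subset_inter_left _ inter_subset_left)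
      (inter_subset_left.trans inter_subset_left) hlower'
      fun p hp => ⟨hmaps' hp.1, hsides.symm.snd_nonpos_iff.2 hp.2⟩

end StraightensBothSides

theorem exists_straightensBothSides {X Y : ℝ × ℝ → ℝ × ℝ} {A B : ℝ × ℝ →L[ℝ] ℝ × ℝ}
    (hX : IsSaddle X A) (hY : IsSaddle Y B) (hAB : 0 < (A (1, 0)).2 * (B (1, 0)).2) :
    ∃ N Φ Ψ ρ, N ∈ 𝓝 0 ∧ ρ ≠ 0 ∧ StraightensBothSides X Y N Φ Ψ ρ := by
  have hA : (A (1, 0)).2 ≠ 0 := left_ne_zero_of_mul hAB.ne'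
  obtain ⟨F, Φ, hXF, hF⟩ := hX.exists_straightensSide (σ := 1) (ρ := (A (1, 0)).2) (by
    rw [one_mul]
    exact mul_self_pos.2 hA)
  obtain ⟨E, Ψ, hYE, hE⟩ := hY.exists_straightensSide (σ := -1) (ρ := -(A (1, 0)).2) (by
    rwa [neg_one_mul, neg_neg])
  exact ⟨{p | X p = F p ∧ Y p = E p}, Φ, Ψ, (A (1, 0)).2, hXF.and hYE, hA,
    ⟨F, fun _ hp => hp.1, hF⟩, ⟨E, fun _ hp => hp.2, hE⟩⟩

theorem detJ_neg_of_eig1_re_mul_eig2_re_neg {X : ℝ × ℝ → ℝ × ℝ}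
    (h : (eig1 X).re * (eig2 X).re < 0) : detJ X < 0 := by
  unfold eig1 eig2 at h
  split_ifs at h with hdisc
  · simp only [Complex.ofReal_re] at h
    linarith [Real.sq_sqrt hdisc]
  · refine absurd h (not_lt.2 ?_)
    simpa using mul_self_nonneg (trJ X / 2)

theorem isSaddle_fderiv {U : Set (ℝ × ℝ)} {X : ℝ × ℝ → ℝ × ℝ} (hU : U ∈ 𝓝 (0, 0))
    (hX : ContDiffOn ℝ 1 X U) (hX₀ : X (0, 0) = (0, 0)) (hdet : detJ X < 0) :
    IsSaddle X (fderiv ℝ X (0, 0)) where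
  hasStrictFDerivAt := (hX.contDiffAt hU).hasStrictFDerivAt one_ne_zero
  map_zero := hX₀
  det_neg := hdet

theorem isSaddle_swap : IsSaddle (fun p : ℝ × ℝ => (p.2, p.1))
    ((ContinuousLinearMap.snd ℝ ℝ ℝ).prod (ContinuousLinearMap.fst ℝ ℝ ℝ)) where
  hasStrictFDerivAt := hasStrictFDerivAt_snd.prodMk hasStrictFDerivAt_fst
  map_zero := rfl
  det_neg := by norm_num

theorem stmt6_general {X Y X' Y' : ℝ × ℝ → ℝ × ℝ} {A B A' B' : ℝ × ℝ →L[ℝ] ℝ × ℝ}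
    (hX : IsSaddle X A) (hY : IsSaddle Y B) (hAB : 0 < (A (1, 0)).2 * (B (1, 0)).2)
    (hX' : IsSaddle X' A') (hY' : IsSaddle Y' B') (hAB' : 0 < (A' (1, 0)).2 * (B' (1, 0)).2) :
    LocalSigmaEquiv X Y X' Y' := by
  obtain ⟨N, Φ, Ψ, ρ, hN, -, h⟩ := exists_straightensBothSides hX hY hAB
  obtain ⟨N', Φ', Ψ', ρ', hN', hρ', h'⟩ := exists_straightensBothSides hX' hY' hAB'
  exact h.localSigmaEquiv h' hρ' hN hN'

end

/-- Saddle-saddle case: `Z ∈ Ω₁` with all eigenvalues real and both products negative is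
locally Σ-equivalent near the origin to `Z_ss = ((y, x), (y, x))`. -/
theorem stmt6 (U : Set (ℝ × ℝ)) (X Y : ℝ × ℝ → ℝ × ℝ)
    (hZ : InOmega1 U X Y)
    (hreal : (eig1 X).im = 0 ∧ (eig2 X).im = 0 ∧ (eig1 Y).im = 0 ∧ (eig2 Y).im = 0)
    (hX : (eig1 X).re * (eig2 X).re < 0) (hY : (eig1 Y).re * (eig2 Y).re < 0) :
    LocalSigmaEquiv X Y
      (fun p : ℝ × ℝ => (p.2, p.1))
      (fun p : ℝ × ℝ => (p.2, p.1)) := by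
  obtain ⟨⟨hU, h₀, hcX, hcY, hX₀, hY₀, -, hcross⟩, -⟩ := hZ
  have hnhds := hU.mem_nhds h₀
  exact stmt6_general (isSaddle_fderiv hnhds hcX hX₀ (detJ_neg_of_eig1_re_mul_eig2_re_neg hX))
    (isSaddle_fderiv hnhds hcY hY₀ (detJ_neg_of_eig1_re_mul_eig2_re_neg hY)) hcross
    isSaddle_swap isSaddle_swap (by norm_num)
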